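/- arXiv:1305.1675 — 5 statements merged into one kernel-verified Lean document; each statement's English description precedes it below -/
import Mathlib

section
/- There exists a constant C > 0 such that for every connected graph G on n vertices with n ≥ 2, the acquaintance time satisfies AC(G) ≤ C · n² / log n. -/
open scoped Classical

/-- A permutation of the vertices arising from swapping the agents along the edges of a
matching in `G`: every vertex is fixed, or is swapped with a neighbour. -/
def IsMatchingSwap {V : Type*} (G : SimpleGraph V) (σ : Equiv.Perm V) : Prop :=
  ∀ v : V, σ v = v ∨ (G.Adj v (σ v) ∧ σ (σ v) = v)

/-- `positions σ i a` is the vertex occupied after `i` rounds by the agent that initially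
occupies vertex `a`, when round `j` rearranges agents by the permutation `σ j`. -/
def positions {V : Type*} (σ : ℕ → Equiv.Perm V) : ℕ → V → V
  | 0 => id
  | (i + 1) => (σ i) ∘ positions σ i

/-- The agents starting at `a` and `b` become acquainted within the first `t` rounds:
at some time `i ≤ t` they occupy adjacent vertices of `G`. -/
def Acquainted {V : Type*} (G : SimpleGraph V) (σ : ℕ → Equiv.Perm V) (t : ℕ) (a b : V) : Prop :=
  ∃ i ≤ t, G.Adj (positions σ i a) (positions σ i b)

/-- The acquaintance time `AC G`: the least number `t` of rounds for which there is a
strategy (a sequence of matchings, one per round, whose swaps move the agents) after which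
every pair of distinct agents is acquainted. -/
noncomputable def AC {V : Type*} (G : SimpleGraph V) : ℕ :=
  sInf {t | ∃ σ : ℕ → Equiv.Perm V, (∀ i < t, IsMatchingSwap G (σ i)) ∧
    ∀ a b : V, a ≠ b → Acquainted G σ t a b}

/-- The helicopter acquaintance time `bAC G`: as `AC G`, but each round may rearrange the
agents by an arbitrary permutation of the vertices. -/
noncomputable def bAC {V : Type*} (G : SimpleGraph V) : ℕ :=
  sInf {t | ∃ σ : ℕ → Equiv.Perm V, ∀ a b : V, a ≠ b → Acquainted G σ t a b}

namespace AcqProof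

section basics

variable {V : Type*}

/-- Net permutation of a finite strategy. -/
def mv : List (Equiv.Perm V) → Equiv.Perm V
  | [] => 1
  | σ :: l => mv l * σ

/-- Two agents at `a`, `b` become adjacent at some time of the strategy. -/
def Met (G : SimpleGraph V) : List (Equiv.Perm V) → V → V → Prop
  | [], a, b => G.Adj a b
  | σ :: l, a, b => G.Adj a b ∨ Met G l (σ a) (σ b)

def Valid (G : SimpleGraph V) (l : List (Equiv.Perm V)) : Prop :=
  ∀ σ ∈ l, IsMatchingSwap G σ

theorem mv_append (l l' : List (Equiv.Perm V)) : mv (l ++ l') = mv l' * mv l := by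
  induction l with
  | nil => simp [mv]
  | cons σ l ih => simp [mv, ih, mul_assoc]

theorem met_append (G : SimpleGraph V) (l l' : List (Equiv.Perm V)) (a b : V) :
    Met G (l ++ l') a b ↔ Met G l a b ∨ Met G l' (mv l a) (mv l b) := by
  induction l generalizing a b with
  | nil =>
    simp only [List.nil_append, mv, Met, Equiv.Perm.coe_one, id]
    constructor
    · exact Or.inr
    · rintro (h | h)
      · cases l' with
        | nil => exact h
        | cons σ l => exact Or.inl h
      · exact h
  | cons σ l ih =>
    simp only [List.cons_append, Met, ih, mv, Equiv.Perm.coe_mul, Function.comp]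
    tauto

theorem met_of_adj {G : SimpleGraph V} (l : List (Equiv.Perm V)) {a b : V} (h : G.Adj a b) :
    Met G l a b := by
  cases l with
  | nil => exact h
  | cons σ l => exact Or.inl h

theorem met_symm {G : SimpleGraph V} {l : List (Equiv.Perm V)} {a b : V} (h : Met G l a b) :
    Met G l b a := by
  induction l generalizing a b with
  | nil => exact SimpleGraph.Adj.symm h
  | cons σ l ih =>
    rcases h with h | h
    · exact Or.inl h.symm
    · exact Or.inr (ih h)

theorem valid_append {G : SimpleGraph V} {l l' : List (Equiv.Perm V)} (h : Valid G l)
    (h' : Valid G l') : Valid G (l ++ l') := by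
  intro σ hσ
  rcases List.mem_append.1 hσ with h1 | h1
  · exact h σ h1
  · exact h' σ h1

theorem met_exists {G : SimpleGraph V} (l : List (Equiv.Perm V)) (σ : ℕ → Equiv.Perm V) (k : ℕ)
    (hσ : ∀ i (hi : i < l.length), σ (k + i) = l[i]) (a b : V)
    (h : Met G l (positions σ k a) (positions σ k b)) :
    ∃ i ≤ k + l.length, G.Adj (positions σ i a) (positions σ i b) := by
  induction l generalizing k with
  | nil => exact ⟨k, by simp, h⟩
  | cons τ l ih =>
    rcases h with h | h
    · exact ⟨k, by simp, h⟩
    · have h0 : σ k = τ := hσ 0 (by simp)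
      obtain ⟨i, hi, h1⟩ := ih (k + 1) (fun i hi => by
        have := hσ (i + 1) (by simpa using hi)
        rw [show k + 1 + i = k + (i + 1) by ring]
        simpa using this) (by simpa [positions, h0] using h)
      exact ⟨i, by simp; omega, h1⟩

theorem AC_le {G : SimpleGraph V} (l : List (Equiv.Perm V)) (hv : Valid G l)
    (h : ∀ a b, a ≠ b → Met G l a b) : AC G ≤ l.length := by
  apply Nat.sInf_le
  refine ⟨fun i => l.getD i 1, ?_, ?_⟩
  · intro i hi
    apply hv
    beta_reduce
    rw [List.getD_eq_getElem _ _ hi]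
    exact List.getElem_mem hi
  · intro a b hab
    have := met_exists (G := G) l (fun i => l.getD i 1) 0 (fun i hi => by
      simp [hi]) a b (by simpa [positions] using h a b hab)
    simpa [Acquainted] using this

theorem matching_one (G : SimpleGraph V) : IsMatchingSwap G 1 := fun _ => Or.inl rfl

theorem matching_swap {G : SimpleGraph V} {x y : V} (h : G.Adj x y) :
    IsMatchingSwap G (Equiv.swap x y) := by
  intro v
  by_cases h1 : v = x
  · subst h1; right; simp [h]
  by_cases h2 : v = y
  · subst h2; right; simp [h.symm]
  left; exact Equiv.swap_apply_of_ne_of_ne h1 h2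

/-- strategy supported in a set -/
def Supp (W : Set V) (l : List (Equiv.Perm V)) : Prop := ∀ σ ∈ l, ∀ v, v ∉ W → σ v = v

theorem supp_stays {W : Set V} {σ : Equiv.Perm V} (h : ∀ v, v ∉ W → σ v = v) {v : V}
    (hv : v ∈ W) : σ v ∈ W := by
  by_contra hc
  have := h _ hc
  rw [σ.injective this] at hc
  exact hc hv

theorem mv_supp {W : Set V} {l : List (Equiv.Perm V)} (h : Supp W l) (v : V) (hv : v ∉ W) :
    mv l v = v := by
  induction l with
  | nil => rfl
  | cons σ l ih =>
    simp only [mv, Equiv.Perm.coe_mul, Function.comp]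
    rw [h σ (by simp) v hv]
    exact ih (fun τ hτ => h τ (by simp [hτ]))

/-- parallel composition of strategies -/
theorem par_two {G : SimpleGraph V} {W W' : Set V} (hd : Disjoint W W')
    (l l' : List (Equiv.Perm V)) (hlen : l.length = l'.length)
    (hv : Valid G l) (hv' : Valid G l') (hs : Supp W l) (hs' : Supp W' l') :
    ∃ L : List (Equiv.Perm V), L.length = l.length ∧ Valid G L ∧ Supp (W ∪ W') L ∧
      (∀ v ∈ W, mv L v = mv l v) ∧ (∀ v ∉ W, mv L v = mv l' v) ∧
      (∀ a ∈ W, ∀ b ∈ W, Met G l a b → Met G L a b) ∧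
      (∀ a ∈ W', ∀ b ∈ W', Met G l' a b → Met G L a b) := by
  have key : ∀ v, v ∈ W → v ∉ W' := fun v h h' => Set.disjoint_left.1 hd h h'
  induction l generalizing l' with
  | nil =>
    have : l' = [] := List.length_eq_zero_iff.1 (by simpa using hlen.symm)
    subst this
    exact ⟨[], rfl, hv, fun σ h => by simp at h, fun _ _ => rfl, fun _ _ => rfl,
      fun _ _ _ _ h => h, fun _ _ _ _ h => h⟩
  | cons σ l ih =>
    cases l' with
    | nil => simp at hlen
    | cons σ' l' =>
      obtain ⟨L, h1, h2, h3, h4, h5, h6, h7⟩ := ih l' (by simpa using hlen)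
        (fun τ h => hv τ (by simp [h])) (fun τ h => hv' τ (by simp [h]))
        (fun τ h => hs τ (by simp [h])) (fun τ h => hs' τ (by simp [h]))
      have s1 := hs σ (by simp)
      have s2 := hs' σ' (by simp)
      have e1 : ∀ v ∈ W, (σ * σ') v = σ v := fun v hv => by
        simp [s2 v (key v hv)]
      have e2 : ∀ v, v ∉ W → (σ * σ') v = σ' v := fun v hv => by
        simp only [Equiv.Perm.coe_mul, Function.comp]
        apply s1
        intro hc
        by_cases h : v ∈ W'
        · exact key _ hc (supp_stays s2 h)
        · rw [s2 v h] at hc; exact hv hc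
      have nW : ∀ v, v ∉ W → σ' v ∉ W := fun v hv hc => by
        by_cases h : v ∈ W'
        · exact key _ hc (supp_stays s2 h)
        · rw [s2 v h] at hc; exact hv hc
      refine ⟨(σ * σ') :: L, by simp [h1], ?_, ?_, ?_, ?_, ?_, ?_⟩
      · intro τ hτ
        rcases List.mem_cons.1 hτ with rfl | hτ
        · intro v
          by_cases hvW : v ∈ W
          · rw [e1 v hvW, e1 _ (supp_stays s1 hvW)]
            exact hv σ (by simp) v
          · rw [e2 v hvW, e2 _ (nW v hvW)]
            exact hv' σ' (by simp) v
        · exact h2 τ hτ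
      · intro τ hτ v hvv
        rcases List.mem_cons.1 hτ with rfl | hτ
        · rw [e2 v (fun h => hvv (Or.inl h)), s2 v (fun h => hvv (Or.inr h))]
        · exact h3 τ hτ v hvv
      · intro v hvW
        have : mv ((σ * σ') :: L) v = mv L ((σ * σ') v) := rfl
        rw [this, e1 v hvW, h4 _ (supp_stays s1 hvW)]; rfl
      · intro v hvW
        have : mv ((σ * σ') :: L) v = mv L ((σ * σ') v) := rfl
        rw [this, e2 v hvW, h5 _ (nW v hvW)]; rfl
      · intro a ha b hb h
        rcases h with h | h
        · exact Or.inl h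
        · right
          rw [e1 a ha, e1 b hb]
          exact h6 _ (supp_stays s1 ha) _ (supp_stays s1 hb) h
      · intro a ha b hb h
        rcases h with h | h
        · exact Or.inl h
        · right
          rw [e2 a (fun h => key _ h ha), e2 b (fun h => key _ h hb)]
          exact h7 _ (supp_stays s2 ha) _ (supp_stays s2 hb) h

/-- inside `W`, one can swap agents at `x`, `y` in five rounds, and they meet. -/
def SwapIn (G : SimpleGraph V) (W : Set V) (x y : V) : Prop :=
  ∃ l : List (Equiv.Perm V), l.length = 5 ∧ Valid G l ∧ Supp W l ∧ mv l = Equiv.swap x y ∧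
    Met G l x y ∧ x ∈ W ∧ y ∈ W

theorem swapIn_one {G : SimpleGraph V} {x y : V} (h : G.Adj x y) : SwapIn G {x, y} x y := by
  refine ⟨[Equiv.swap x y, 1, 1, 1, 1], rfl, ?_, ?_, ?_, ?_, by simp, by simp⟩
  · intro σ hσ
    simp at hσ
    rcases hσ with rfl | rfl
    · exact matching_swap h
    · exact matching_one G
  · intro σ hσ v hv
    simp at hσ hv
    rcases hσ with rfl | rfl
    · exact Equiv.swap_apply_of_ne_of_ne hv.1 hv.2
    · rfl
  · simp [mv]
  · exact Or.inl h

theorem swapIn_two {G : SimpleGraph V} {x u y : V} (h : G.Adj x u) (h' : G.Adj u y)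
    (hne : x ≠ y) : SwapIn G {x, u, y} x y := by
  have a1 := h.ne
  have a2 := h'.ne
  refine ⟨[Equiv.swap x u, Equiv.swap u y, Equiv.swap x u, 1, 1], rfl, ?_, ?_, ?_, ?_,
    by simp, by simp⟩
  · intro σ hσ
    simp at hσ
    rcases hσ with rfl | rfl | rfl | rfl
    · exact matching_swap h
    · exact matching_swap h'
    · exact matching_swap h
    · exact matching_one G
  · intro σ hσ v hv
    simp at hσ hv
    obtain ⟨h1, h2, h3⟩ := hv
    rcases hσ with rfl | rfl | rfl | rfl
    · exact Equiv.swap_apply_of_ne_of_ne h1 h2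
    · exact Equiv.swap_apply_of_ne_of_ne h2 h3
    · exact Equiv.swap_apply_of_ne_of_ne h1 h2
    · rfl
  · ext v
    simp only [mv, Equiv.Perm.coe_mul, Function.comp, Equiv.swap_apply_def, one_mul]
    grind
  · right
    left
    rw [Equiv.swap_apply_left, Equiv.swap_apply_of_ne_of_ne hne.symm a2.symm]
    exact h'

theorem swapIn_three {G : SimpleGraph V} {x u v y : V} (h : G.Adj x u) (h' : G.Adj u v)
    (h'' : G.Adj v y) (hne : x ≠ y) (hxv : x ≠ v) (huy : u ≠ y) :
    SwapIn G {x, u, v, y} x y := by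
  have a1 := h.ne
  have a2 := h'.ne
  have a3 := h''.ne
  refine ⟨[Equiv.swap x u, Equiv.swap u v, Equiv.swap v y, Equiv.swap u v, Equiv.swap x u],
    rfl, ?_, ?_, ?_, ?_, by simp, by simp⟩
  · intro σ hσ
    simp at hσ
    rcases hσ with rfl | rfl | rfl | rfl | rfl
    · exact matching_swap h
    · exact matching_swap h'
    · exact matching_swap h''
    · exact matching_swap h'
    · exact matching_swap h
  · intro σ hσ z hv
    simp at hσ hv
    obtain ⟨h1, h2, h3, h4⟩ := hv
    rcases hσ with rfl | rfl | rfl | rfl | rfl <;>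
      apply Equiv.swap_apply_of_ne_of_ne <;> assumption
  · ext z
    simp only [mv, Equiv.Perm.coe_mul, Function.comp, Equiv.swap_apply_def, one_mul]
    grind
  · right
    right
    left
    rw [Equiv.swap_apply_left, Equiv.swap_apply_of_ne_of_ne hne.symm huy.symm,
      Equiv.swap_apply_left, Equiv.swap_apply_of_ne_of_ne huy.symm a3.symm]
    exact h''

/-- All the swaps of a family with disjoint supports in parallel. -/
theorem par_class {G : SimpleGraph V} {ι : Type*} (I : Finset ι) (x y : ι → V)
    (W : ι → Set V) (hW : ∀ i ∈ I, SwapIn G (W i) (x i) (y i))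
    (hd : ∀ i ∈ I, ∀ j ∈ I, i ≠ j → Disjoint (W i) (W j)) :
    ∃ l : List (Equiv.Perm V), l.length = 5 ∧ Valid G l ∧
      (∀ i ∈ I, mv l (x i) = y i) ∧ (∀ i ∈ I, mv l (y i) = x i) ∧
      (∀ v, (∀ i ∈ I, v ≠ x i ∧ v ≠ y i) → mv l v = v) ∧
      (∀ i ∈ I, Met G l (x i) (y i)) := by
  suffices H : ∃ l : List (Equiv.Perm V), l.length = 5 ∧ Valid G l ∧
      Supp (⋃ i ∈ I, W i) l ∧
      (∀ i ∈ I, mv l (x i) = y i) ∧ (∀ i ∈ I, mv l (y i) = x i) ∧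
      (∀ v, (∀ i ∈ I, v ≠ x i ∧ v ≠ y i) → mv l v = v) ∧
      (∀ i ∈ I, Met G l (x i) (y i)) by
    obtain ⟨l, h1, h2, -, h3⟩ := H
    exact ⟨l, h1, h2, h3⟩
  induction I using Finset.induction_on with
  | empty =>
    refine ⟨List.replicate 5 1, by simp, ?_, ?_, by simp, by simp, ?_, by simp⟩
    · intro σ hσ
      rw [List.eq_of_mem_replicate hσ]; exact matching_one G
    · intro σ hσ v _
      rw [List.eq_of_mem_replicate hσ]; rfl
    · intro v _
      simp [mv, List.replicate]
  | insert i I hi ih =>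
    obtain ⟨l', a1, a2, a3, a4, a5, a6, a7⟩ := ih (fun j hj => hW j (by simp [hj]))
      (fun j hj k hk => hd j (by simp [hj]) k (by simp [hk]))
    obtain ⟨l, b1, b2, b3, b4, b5, b6, b7⟩ := hW i (by simp)
    have dis : Disjoint (W i) (⋃ j ∈ I, W j) := by
      simp only [Set.disjoint_iUnion_right]
      intro j hj
      exact hd i (by simp) j (by simp [hj]) (by rintro rfl; exact hi hj)
    obtain ⟨L, c1, c2, c3, c4, c5, c6, c7⟩ := par_two (G := G) dis l l' (by omega) b2 a2 b3 a3
    have hWm : ∀ j ∈ I, x j ∈ W j ∧ y j ∈ W j := fun j hj => by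
      obtain ⟨_, _, _, _, _, _, h, h'⟩ := hW j (by simp [hj])
      exact ⟨h, h'⟩
    have hWn : ∀ j ∈ I, ∀ v ∈ W j, v ∉ W i := fun j hj v hv hv' =>
      Set.disjoint_left.1 dis hv' (by simp only [Set.mem_iUnion]; exact ⟨j, hj, hv⟩)
    refine ⟨L, by omega, c2, ?_, ?_, ?_, ?_, ?_⟩
    · simpa using c3
    · intro j hj
      rcases Finset.mem_insert.1 hj with rfl | hj
      · rw [c4 _ b6, b4]; simp
      · rw [c5 _ (hWn j hj _ (hWm j hj).1), a4 j hj]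
    · intro j hj
      rcases Finset.mem_insert.1 hj with rfl | hj
      · rw [c4 _ b7, b4]; simp
      · rw [c5 _ (hWn j hj _ (hWm j hj).2), a5 j hj]
    · intro v hv
      by_cases hvi : v ∈ W i
      · rw [c4 v hvi, b4]
        have := hv i (by simp)
        exact Equiv.swap_apply_of_ne_of_ne this.1 this.2
      · rw [c5 v hvi]
        exact a6 v (fun j hj => hv j (by simp [hj]))
    · intro j hj
      rcases Finset.mem_insert.1 hj with rfl | hj
      · exact c6 _ b6 _ b7 b5
      · refine c7 _ ?_ _ ?_ (a7 j hj) <;> simp only [Set.mem_iUnion]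
        · exact ⟨j, hj, (hWm j hj).1⟩
        · exact ⟨j, hj, (hWm j hj).2⟩

end basics

section bounded

variable {V : Type*}

def Near (G : SimpleGraph V) (r : ℕ) (x y : V) : Prop := ∃ p : G.Walk x y, p.length ≤ r

theorem near_trans {G : SimpleGraph V} {r s : ℕ} {x y z : V} (h : Near G r x y)
    (h' : Near G s y z) : Near G (r + s) x z := by
  obtain ⟨p, hp⟩ := h
  obtain ⟨q, hq⟩ := h'
  exact ⟨p.append q, by rw [SimpleGraph.Walk.length_append]; omega⟩

theorem near_symm {G : SimpleGraph V} {r : ℕ} {x y : V} (h : Near G r x y) : Near G r y x := by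
  obtain ⟨p, hp⟩ := h
  exact ⟨p.reverse, by simpa using hp⟩

theorem near_refl (G : SimpleGraph V) (r : ℕ) (x : V) : Near G r x x := ⟨.nil, by simp⟩

theorem near_adj {G : SimpleGraph V} {x y : V} (h : G.Adj x y) : Near G 1 x y :=
  ⟨.cons h .nil, by simp⟩

theorem near_mono {G : SimpleGraph V} {r s : ℕ} (hrs : r ≤ s) {x y : V} (h : Near G r x y) :
    Near G s x y := by
  obtain ⟨p, hp⟩ := h
  exact ⟨p, by omega⟩

theorem ball_card [Fintype V] (G : SimpleGraph V) (D : ℕ) (hD : ∀ v, G.degree v ≤ D) (r : ℕ)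
    (x : V) : (Finset.univ.filter (fun y => Near G r x y)).card ≤ (D + 1) ^ r := by
  induction r generalizing x with
  | zero =>
    rw [pow_zero]
    apply Finset.card_le_one.2
    intro a ha b hb
    simp only [Finset.mem_filter, Finset.mem_univ, true_and] at ha hb
    obtain ⟨p, hp⟩ := ha
    obtain ⟨q, hq⟩ := hb
    rw [← SimpleGraph.Walk.eq_of_length_eq_zero (p := p) (by omega),
      ← SimpleGraph.Walk.eq_of_length_eq_zero (p := q) (by omega)]
  | succ r ih =>
    have hsub : Finset.univ.filter (fun y => Near G (r + 1) x y) ⊆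
        (insert x (G.neighborFinset x)).biUnion
          (fun z => Finset.univ.filter (fun y => Near G r z y)) := by
      intro y hy
      simp only [Finset.mem_filter, Finset.mem_univ, true_and, Finset.mem_biUnion,
        Finset.mem_insert, SimpleGraph.mem_neighborFinset] at hy ⊢
      obtain ⟨p, hp⟩ := hy
      cases p with
      | nil => exact ⟨x, Or.inl rfl, near_refl G r x⟩
      | cons h p => exact ⟨_, Or.inr h, p, by simpa using hp⟩
    refine (Finset.card_le_card hsub).trans ?_
    refine (Finset.card_biUnion_le_card_mul _ _ _ (fun z _ => ih z)).trans ?_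
    rw [pow_succ, mul_comm]
    gcongr
    refine (Finset.card_insert_le _ _).trans ?_
    have := hD x
    rw [← SimpleGraph.card_neighborFinset_eq_degree] at this
    omega

theorem exists_swapIn {G : SimpleGraph V} {x y : V} (hne : x ≠ y) (h : Near G 3 x y) :
    ∃ W : Set V, SwapIn G W x y ∧ ∀ z ∈ W, Near G 3 x z := by
  obtain ⟨p, hp⟩ := h
  have r0 := near_refl G 3 x
  cases p with
  | nil => exact absurd rfl hne
  | @cons _ u _ h p =>
    have n1 := near_adj h
    cases p with
    | nil =>
      refine ⟨_, swapIn_one h, ?_⟩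
      rintro z (rfl | rfl)
      · exact r0
      · exact near_mono (by norm_num) n1
    | @cons _ v _ h' p =>
      have n2 := near_trans n1 (near_adj h')
      cases p with
      | nil =>
        refine ⟨_, swapIn_two h h' hne, ?_⟩
        rintro z (rfl | rfl | rfl)
        · exact r0
        · exact near_mono (by norm_num) n1
        · exact near_mono (by norm_num) n2
      | @cons _ w _ h'' p =>
        have n3 := near_trans n2 (near_adj h'')
        cases p with
        | cons _ p => simp at hp; omega
        | nil =>
          by_cases hxv : x = v
          · subst hxv
            refine ⟨_, swapIn_one h'', ?_⟩
            rintro z (rfl | rfl)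
            · exact r0
            · exact near_mono (by norm_num) n3
          by_cases huy : u = y
          · subst huy
            refine ⟨_, swapIn_one h, ?_⟩
            rintro z (rfl | rfl)
            · exact r0
            · exact near_mono (by norm_num) n1
          refine ⟨_, swapIn_three h h' h'' hne hxv huy, ?_⟩
          rintro z (rfl | rfl | rfl | rfl)
          · exact r0
          · exact near_mono (by norm_num) n1
          · exact near_mono (by norm_num) n2
          · exact near_mono (by norm_num) n3

theorem greedy_color {ι : Type*} (I : Finset ι) (R : ι → ι → Prop) (hs : ∀ i j, R i j → R j i)
    (D : ℕ) (hD : ∀ i ∈ I, (I.filter (fun j => R i j)).card ≤ D) :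
    ∃ c : ι → ℕ, (∀ i ∈ I, c i ≤ D) ∧ ∀ i ∈ I, ∀ j ∈ I, i ≠ j → R i j → c i ≠ c j := by
  induction I using Finset.induction_on with
  | empty => exact ⟨fun _ => 0, by simp, by simp⟩
  | insert a I ha ih =>
    obtain ⟨c, h1, h2⟩ := ih (fun i hi => by
      refine le_trans (Finset.card_le_card ?_) (hD i (by simp [hi]))
      exact Finset.filter_subset_filter _ (Finset.subset_insert _ _))
    have hcard : ((I.filter (fun j => R a j)).image c).card < (Finset.range (D + 1)).card := by
      rw [Finset.card_range]
      refine Nat.lt_succ_of_le (Finset.card_image_le.trans ?_)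
      refine le_trans (Finset.card_le_card ?_) (hD a (by simp))
      exact Finset.filter_subset_filter _ (Finset.subset_insert _ _)
    obtain ⟨k, hk, hk'⟩ := Finset.exists_mem_notMem_of_card_lt_card hcard
    have hk2 : ∀ j ∈ I, R a j → c j ≠ k := fun j hj hR hc => hk' (by
      rw [Finset.mem_image]; exact ⟨j, by simp [hj, hR], hc⟩)
    refine ⟨Function.update c a k, ?_, ?_⟩
    · intro i hi
      rcases Finset.mem_insert.1 hi with rfl | hi'
      · simp at hk ⊢; omega
      · rw [Function.update_of_ne (fun h : i = a => ha (h ▸ hi'))]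
        exact h1 i hi'
    · intro i hi j hj hij hR
      rcases Finset.mem_insert.1 hi with rfl | hi'
      · rcases Finset.mem_insert.1 hj with rfl | hj'
        · exact absurd rfl hij
        · rw [Function.update_self, Function.update_of_ne hij.symm]
          exact (hk2 j hj' hR).symm
      · have hia : i ≠ a := fun h => ha (h ▸ hi')
        rcases Finset.mem_insert.1 hj with rfl | hj'
        · rw [Function.update_self, Function.update_of_ne hij]
          exact hk2 i hi' (hs _ _ hR)
        · have hja : j ≠ a := fun h => ha (h ▸ hj')
          rw [Function.update_of_ne hia, Function.update_of_ne hja]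
          exact h2 i hi' j hj' hij hR

/-- All the swaps of a family, with bounded conflicts. -/
theorem multi_class {G : SimpleGraph V} {ι : Type*} (I : Finset ι) (x y : ι → V)
    (W : ι → Set V) (hW : ∀ i ∈ I, SwapIn G (W i) (x i) (y i))
    (hd : ∀ i ∈ I, ∀ j ∈ I, i ≠ j → x i ≠ x j ∧ x i ≠ y j ∧ y i ≠ x j ∧ y i ≠ y j) (D : ℕ)
    (hD : ∀ i ∈ I, (I.filter (fun j => ¬ Disjoint (W i) (W j))).card ≤ D) :
    ∃ l : List (Equiv.Perm V), l.length = 5 * (D + 1) ∧ Valid G l ∧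
      (∀ i ∈ I, mv l (x i) = y i) ∧ (∀ i ∈ I, mv l (y i) = x i) ∧
      (∀ v, (∀ i ∈ I, v ≠ x i ∧ v ≠ y i) → mv l v = v) ∧
      (∀ i ∈ I, Met G l (x i) (y i)) := by
  obtain ⟨c, hc1, hc2⟩ := greedy_color I (fun i j => ¬ Disjoint (W i) (W j))
    (fun i j h h' => h h'.symm) D (fun i hi => by convert hD i hi)
  have H : ∀ k : ℕ, ∃ l : List (Equiv.Perm V), l.length = 5 * k ∧ Valid G l ∧
      (∀ i ∈ I, c i < k → mv l (x i) = y i) ∧ (∀ i ∈ I, c i < k → mv l (y i) = x i) ∧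
      (∀ v, (∀ i ∈ I, c i < k → v ≠ x i ∧ v ≠ y i) → mv l v = v) ∧
      (∀ i ∈ I, c i < k → Met G l (x i) (y i)) := by
    intro k
    induction k with
    | zero => exact ⟨[], rfl, fun σ h => by simp at h, by simp, by simp, fun v _ => rfl, by simp⟩
    | succ k ih =>
      obtain ⟨l, a1, a2, a3, a4, a5, a6⟩ := ih
      obtain ⟨l', b1, b2, b3, b4, b5, b6⟩ := par_class (G := G) (I.filter (fun i => c i = k)) x y W
        (fun i hi => hW i (Finset.mem_filter.1 hi).1)
        (fun i hi j hj hij => by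
          rw [Finset.mem_filter] at hi hj
          by_contra hcon
          exact hc2 i hi.1 j hj.1 hij hcon (hi.2.trans hj.2.symm))
      have fx : ∀ i ∈ I, c i < k → mv l' (x i) = x i ∧ mv l' (y i) = y i := by
        intro i hi hik
        constructor <;> apply b5 <;> intro j hj <;> rw [Finset.mem_filter] at hj <;>
          have := hd i hi j hj.1 (by rintro rfl; omega)
        · exact ⟨this.1, this.2.1⟩
        · exact this.2.2
      have fx' : ∀ i ∈ I, c i = k → mv l (x i) = x i ∧ mv l (y i) = y i := by
        intro i hi hik
        constructor <;> apply a5 <;> intro j hj hj2 <;>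
          have := hd i hi j hj (by rintro rfl; omega)
        · exact ⟨this.1, this.2.1⟩
        · exact this.2.2
      refine ⟨l ++ l', by rw [List.length_append]; omega, valid_append a2 b2, ?_, ?_, ?_, ?_⟩
      · intro i hi hik
        rw [mv_append, Equiv.Perm.mul_apply]
        rcases Nat.lt_succ_iff_lt_or_eq.1 hik with h | h
        · rw [a3 i hi h, (fx i hi h).2]
        · rw [(fx' i hi h).1, b3 i (by simp [hi, h])]
      · intro i hi hik
        rw [mv_append, Equiv.Perm.mul_apply]
        rcases Nat.lt_succ_iff_lt_or_eq.1 hik with h | h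
        · rw [a4 i hi h, (fx i hi h).1]
        · rw [(fx' i hi h).2, b4 i (by simp [hi, h])]
      · intro v hv
        rw [mv_append, Equiv.Perm.mul_apply, a5 v (fun i hi h => hv i hi (by omega))]
        apply b5
        intro i hi
        rw [Finset.mem_filter] at hi
        exact hv i hi.1 (by omega)
      · intro i hi hik
        rw [met_append]
        rcases Nat.lt_succ_iff_lt_or_eq.1 hik with h | h
        · exact Or.inl (a6 i hi h)
        · right
          rw [(fx' i hi h).1, (fx' i hi h).2]
          exact b6 i (by simp [hi, h])
  obtain ⟨l, a1, a2, a3, a4, a5, a6⟩ := H (D + 1)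
  have hlt : ∀ i ∈ I, c i < D + 1 := fun i hi => Nat.lt_succ_of_le (hc1 i hi)
  exact ⟨l, a1, a2, fun i hi => a3 i hi (hlt i hi), fun i hi => a4 i hi (hlt i hi),
    fun v hv => a5 v (fun i hi _ => hv i hi), fun i hi => a6 i hi (hlt i hi)⟩

/-- position on the path of the agent with cyclic coordinate `x` -/
def fold (n x : ℕ) : ℕ := if x < n then x else if x < 2 * n then 2 * n - 1 - x else x - 2 * n

theorem path_strategy [Fintype V] (G : SimpleGraph V) (D : ℕ) (hD : ∀ v, G.degree v ≤ D)
    (n : ℕ) (v : ℕ → V) (hinj : ∀ i < n, ∀ j < n, v i = v j → i = j)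
    (hsurj : ∀ x, ∃ i < n, v i = x) (hnear : ∀ i, i + 1 < n → Near G 3 (v i) (v (i + 1))) :
    AC G ≤ 5 * ((D + 1) ^ 6 + 1) * n := by
  have hWex : ∀ i, ∃ W : Set V, i + 1 < n → SwapIn G W (v i) (v (i + 1)) ∧
      ∀ z ∈ W, Near G 3 (v i) z := by
    intro i
    by_cases h : i + 1 < n
    · obtain ⟨W, hW⟩ := exists_swapIn (G := G) (x := v i) (y := v (i + 1))
        (fun he => by have := hinj i (by omega) _ h he; omega) (hnear i h)
      exact ⟨W, fun _ => hW⟩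
    · exact ⟨∅, fun h' => absurd h' h⟩
  choose W hW using hWex
  have round : ∀ T : ℕ, ∃ l : List (Equiv.Perm V), l.length = 5 * ((D + 1) ^ 6 + 1) ∧ Valid G l ∧
      (∀ i, i + 1 < n → i % 2 = T % 2 → mv l (v i) = v (i + 1)) ∧
      (∀ i, i + 1 < n → i % 2 = T % 2 → mv l (v (i + 1)) = v i) ∧
      (∀ i < n, (i + 1 < n → i % 2 ≠ T % 2) → (0 < i → (i - 1) % 2 ≠ T % 2) →
        mv l (v i) = v i) ∧
      (∀ i, i + 1 < n → i % 2 = T % 2 → Met G l (v i) (v (i + 1))) := by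
    intro T
    set I := (Finset.range n).filter (fun i => i + 1 < n ∧ i % 2 = T % 2) with hI
    have hmem : ∀ i, i ∈ I ↔ i + 1 < n ∧ i % 2 = T % 2 := by
      intro i; rw [hI, Finset.mem_filter, Finset.mem_range]; omega
    obtain ⟨l, a1, a2, a3, a4, a5, a6⟩ := multi_class (G := G) I v (fun i => v (i + 1)) W
      (fun i hi => (hW i ((hmem i).1 hi).1).1)
      (fun i hi j hj hij => by
        rw [hmem] at hi hj
        refine ⟨fun h => ?_, fun h => ?_, fun h => ?_, fun h => ?_⟩ <;>
        · have := hinj _ (by omega) _ (by omega) h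
          omega)
      ((D + 1) ^ 6)
      (fun i hi => by
        refine le_trans ?_ (ball_card G D hD 6 (v i))
        apply Finset.card_le_card_of_injOn v
        · intro j hj
          simp only [Finset.coe_filter, Set.mem_ofPred_eq, Finset.mem_univ, true_and] at hj ⊢
          obtain ⟨hj, hc⟩ := hj
          obtain ⟨z, hz1, hz2⟩ := Set.not_disjoint_iff.1 hc
          exact near_trans ((hW i ((hmem i).1 hi).1).2 z hz1)
            (near_symm ((hW j ((hmem j).1 hj).1).2 z hz2))
        · intro j hj k hk h
          simp only [Finset.coe_filter, Set.mem_ofPred_eq, hmem] at hj hk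
          exact hinj _ (by omega) _ (by omega) h)
    refine ⟨l, a1, a2, fun i h h' => a3 i ((hmem i).2 ⟨h, h'⟩),
      fun i h h' => a4 i ((hmem i).2 ⟨h, h'⟩), ?_, fun i h h' => a6 i ((hmem i).2 ⟨h, h'⟩)⟩
    intro i hi h1 h2
    apply a5
    intro j hj
    rw [hmem] at hj
    constructor <;> intro h <;> have := hinj _ (by omega) _ (by omega) h
    · subst this; exact h1 hj.1 hj.2
    · subst this; exact h2 (by omega) (by simpa using hj.2)
  choose R r1 r2 r3 r4 r5 r6 using round
  have step : ∀ T x, T < n → x % 2 = 0 → x < 2 * n →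
      mv (R T) (v (fold n (x + T))) = v (fold n (x + (T + 1))) := by
    intro T x hT hx hx2
    have hlt : fold n (x + T) < n := by unfold fold; split_ifs <;> omega
    by_cases c1 : fold n (x + T) + 1 < n ∧ fold n (x + T) % 2 = T % 2
    · rw [r3 T _ c1.1 c1.2]
      congr 1
      unfold fold at *
      split_ifs at * <;> omega
    · by_cases c2 : 0 < fold n (x + T) ∧ (fold n (x + T) - 1) % 2 = T % 2
      · obtain ⟨c2, c3⟩ := c2
        have e : fold n (x + T) = (fold n (x + T) - 1) + 1 := by omega
        rw [e, r4 T _ (by omega) c3]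
        congr 1
        unfold fold at *
        split_ifs at * <;> omega
      · rw [r5 T _ hlt (fun a b => c1 ⟨a, b⟩) (fun a b => c2 ⟨a, b⟩)]
        congr 1
        unfold fold at *
        split_ifs at * <;> omega
  have main : ∀ T ≤ n, ∃ l : List (Equiv.Perm V), l.length = 5 * ((D + 1) ^ 6 + 1) * T ∧
      Valid G l ∧
      (∀ x, x % 2 = 0 → x < 2 * n → mv l (v (fold n x)) = v (fold n (x + T))) ∧
      (∀ t < T, ∀ x y, x % 2 = 0 → x < 2 * n → y % 2 = 0 → y < 2 * n →
        fold n (x + t) % 2 = t % 2 → fold n (x + t) + 1 = fold n (y + t) →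
        fold n (y + t) < n → Met G l (v (fold n x)) (v (fold n y))) := by
    intro T
    induction T with
    | zero =>
      intro _
      exact ⟨[], by simp, fun σ h => by simp at h, fun x _ _ => rfl, fun t ht => by omega⟩
    | succ T ih =>
      intro hT
      obtain ⟨l, a1, a2, a3, a4⟩ := ih (by omega)
      refine ⟨l ++ R T, ?_, valid_append a2 (r2 T), ?_, ?_⟩
      · rw [List.length_append, a1, r1]; ring
      · intro x hx hx2
        rw [mv_append, Equiv.Perm.mul_apply, a3 x hx hx2, step T x (by omega) hx hx2]
      · intro t ht x y hx hx2 hy hy2 h1 h2 h3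
        rw [met_append]
        rcases Nat.lt_succ_iff_lt_or_eq.1 ht with h | rfl
        · exact Or.inl (a4 t h x y hx hx2 hy hy2 h1 h2 h3)
        · right
          rw [a3 x hx hx2, a3 y hy hy2, ← h2]
          exact r6 t _ (by omega) h1
  obtain ⟨l, a1, a2, a3, a4⟩ := main n le_rfl
  rw [← a1]
  refine AC_le l a2 ?_
  intro a b hab
  have coord : ∀ a, ∃ x', x' < n ∧ v (fold n (2 * x')) = a := by
    intro a
    obtain ⟨i, hi, rfl⟩ := hsurj a
    by_cases h : i % 2 = 0
    · refine ⟨i / 2, by omega, ?_⟩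
      congr 1
      unfold fold
      split_ifs <;> omega
    · refine ⟨(2 * n - 1 - i) / 2, by omega, ?_⟩
      congr 1
      unfold fold
      split_ifs <;> omega
  obtain ⟨x, hx, rfl⟩ := coord a
  obtain ⟨y, hy, rfl⟩ := coord b
  have hxy : x ≠ y := by rintro rfl; exact hab rfl
  have key : ∃ t < n, (fold n (2 * x + t) % 2 = t % 2 ∧ fold n (2 * x + t) + 1 = fold n (2 * y + t) ∧
        fold n (2 * y + t) < n) ∨ (fold n (2 * y + t) % 2 = t % 2 ∧
        fold n (2 * y + t) + 1 = fold n (2 * x + t) ∧ fold n (2 * x + t) < n) := by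
    by_cases h : n ≤ x + y
    · refine ⟨2 * n - 1 - x - y, by omega, ?_⟩
      unfold fold
      split_ifs <;> omega
    · refine ⟨n - 1 - x - y, by omega, ?_⟩
      unfold fold
      split_ifs <;> omega
  obtain ⟨t, ht, ⟨h1, h2, h3⟩ | ⟨h1, h2, h3⟩⟩ := key
  · exact a4 t ht (2 * x) (2 * y) (by omega) (by omega) (by omega) (by omega) h1 h2 h3
  · exact met_symm (a4 t ht (2 * y) (2 * x) (by omega) (by omega) (by omega) (by omega) h1 h2 h3)

end bounded

section ham

variable {V : Type*}

theorem exists_parent {G : SimpleGraph V} (hG : G.Connected) (r v : V) (hv : v ≠ r) :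
    ∃ p, G.Adj v p ∧ G.dist r p + 1 = G.dist r v := by
  obtain ⟨w, hw⟩ := hG.exists_walk_length_eq_dist v r
  cases w with
  | nil => exact absurd rfl hv
  | @cons _ p _ h w =>
    refine ⟨p, h, ?_⟩
    rw [SimpleGraph.dist_comm (u := r) (v := p), SimpleGraph.dist_comm (u := r) (v := v)]
    have h1 := SimpleGraph.dist_le w
    have h2 := hG.dist_triangle (u := v) (v := p) (w := r)
    have h3 : G.dist v p = 1 := SimpleGraph.dist_eq_one_iff_adj.2 h
    simp at hw
    omega

theorem ham_aux {G : SimpleGraph V} (r : V) (h : V → ℕ) (k : ℕ) : ∀ (R : Finset V)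
    (L : V → List V), R.card = k → r ∈ R →
    (∀ v ∈ R, v ≠ r → ∃ p ∈ R, G.Adj v p ∧ h p < h v) →
    (∀ v ∈ R, (L v).head? = some v) →
    (∀ v ∈ R, ∀ z, (L v).getLast? = some z → Near G 1 v z) →
    (∀ v ∈ R, (L v).IsChain (Near G 3)) →
    (∀ v ∈ R, (L v).Nodup) →
    (∀ u ∈ R, ∀ v ∈ R, u ≠ v → ∀ x ∈ L u, x ∉ L v) →
    (∀ x, ∃ v ∈ R, x ∈ L v) →
    ∃ l : List V, l.Nodup ∧ (∀ x, x ∈ l) ∧ l.IsChain (Near G 3) := by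
  induction k with
  | zero =>
    intro R L hc hr
    rw [Finset.card_eq_zero] at hc
    simp [hc] at hr
  | succ k ih =>
    intro R L hc hr hpar h1 h2 h3 h4 h5 h6
    by_cases hne : (R.erase r).Nonempty
    · obtain ⟨v, hv, hmax⟩ := Finset.exists_max_image (R.erase r) h hne
      rw [Finset.mem_erase] at hv
      obtain ⟨p, hpR, hadj, hlt⟩ := hpar v hv.2 hv.1
      have hpv : p ≠ v := by rintro rfl; omega
      refine ih (R.erase v) (Function.update L p (L p ++ (L v).reverse)) ?_ ?_ ?_ ?_ ?_ ?_ ?_ ?_ ?_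
      · rw [Finset.card_erase_of_mem hv.2]; omega
      · rw [Finset.mem_erase]; exact ⟨hv.1.symm, hr⟩
      · intro u hu hur
        rw [Finset.mem_erase] at hu
        obtain ⟨q, hq, hq1, hq2⟩ := hpar u hu.2 hur
        refine ⟨q, ?_, hq1, hq2⟩
        rw [Finset.mem_erase]
        refine ⟨?_, hq⟩
        rintro rfl
        have := hmax u (by rw [Finset.mem_erase]; exact ⟨hur, hu.2⟩)
        omega
      · intro u hu
        rw [Finset.mem_erase] at hu
        by_cases hup : u = p
        · subst hup
          rw [Function.update_self, List.head?_append, h1 u hu.2]; rfl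
        · rw [Function.update_of_ne hup]; exact h1 u hu.2
      · intro u hu z hz
        rw [Finset.mem_erase] at hu
        by_cases hup : u = p
        · subst hup
          rw [Function.update_self, List.getLast?_append, List.getLast?_reverse, h1 v hv.2] at hz
          simp at hz
          subst hz
          exact near_adj hadj.symm
        · rw [Function.update_of_ne hup] at hz; exact h2 u hu.2 z hz
      · intro u hu
        rw [Finset.mem_erase] at hu
        by_cases hup : u = p
        · subst hup
          rw [Function.update_self, List.isChain_append]
          refine ⟨h3 u hu.2, ?_, ?_⟩
          · rw [List.isChain_reverse]
            exact (h3 v hv.2).imp (fun a b hab => near_symm hab)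
          · intro a ha b hb
            rw [List.head?_reverse] at hb
            have n1 := h2 u hu.2 a ha
            have n2 := h2 v hv.2 b hb
            exact near_trans (near_trans (near_symm n1) (near_adj hadj.symm)) n2
        · rw [Function.update_of_ne hup]; exact h3 u hu.2
      · intro u hu
        rw [Finset.mem_erase] at hu
        by_cases hup : u = p
        · subst hup
          rw [Function.update_self, List.nodup_append]
          refine ⟨h4 u hu.2, List.nodup_reverse.2 (h4 v hv.2), ?_⟩
          rintro a ha b hb rfl
          exact h5 u hu.2 v hv.2 hu.1 a ha (List.mem_reverse.1 hb)
        · rw [Function.update_of_ne hup]; exact h4 u hu.2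
      · intro u hu w hw huw x hxu hxw
        rw [Finset.mem_erase] at hu hw
        by_cases hup : u = p
        · subst hup
          rw [Function.update_self] at hxu
          rw [Function.update_of_ne huw.symm] at hxw
          rcases List.mem_append.1 hxu with hx | hx
          · exact h5 u hu.2 w hw.2 huw x hx hxw
          · exact h5 w hw.2 v hv.2 hw.1 x hxw (List.mem_reverse.1 hx)
        · rw [Function.update_of_ne hup] at hxu
          by_cases hwp : w = p
          · subst hwp
            rw [Function.update_self] at hxw
            rcases List.mem_append.1 hxw with hx | hx
            · exact h5 u hu.2 w hw.2 huw x hxu hx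
            · exact h5 u hu.2 v hv.2 hu.1 x hxu (List.mem_reverse.1 hx)
          · rw [Function.update_of_ne hwp] at hxw
            exact h5 u hu.2 w hw.2 huw x hxu hxw
      · intro x
        obtain ⟨u, hu, hx⟩ := h6 x
        by_cases huv : u = v
        · subst huv
          refine ⟨p, by rw [Finset.mem_erase]; exact ⟨hpv, hpR⟩, ?_⟩
          rw [Function.update_self]; simp [hx]
        · refine ⟨u, by rw [Finset.mem_erase]; exact ⟨huv, hu⟩, ?_⟩
          by_cases hup : u = p
          · subst hup; rw [Function.update_self]; simp [hx]
          · rw [Function.update_of_ne hup]; exact hx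
    · refine ⟨L r, h4 r hr, ?_, h3 r hr⟩
      intro x
      obtain ⟨u, hu, hx⟩ := h6 x
      have : u = r := by
        by_contra hc
        exact hne ⟨u, by rw [Finset.mem_erase]; exact ⟨hc, hu⟩⟩
      rwa [this] at hx

theorem ham [Fintype V] {G : SimpleGraph V} (hG : G.Connected) :
    ∃ l : List V, l.Nodup ∧ (∀ x, x ∈ l) ∧ l.IsChain (Near G 3) := by
  obtain ⟨r⟩ := hG.nonempty
  refine ham_aux (G := G) r (G.dist r) _ Finset.univ (fun v => [v]) rfl (by simp) ?_ (by simp) ?_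
    (by simp) (by simp) ?_ (by simp)
  · intro v _ hv
    obtain ⟨p, hp, h⟩ := exists_parent hG r v hv
    exact ⟨p, by simp, hp, by omega⟩
  · intro v _ z hz
    simp at hz
    subst hz
    exact near_refl G 1 v
  · intro u _ v _ huv x hx
    simp at hx ⊢
    subst hx
    exact huv

theorem AC_bounded [Fintype V] {G : SimpleGraph V} (hG : G.Connected) (D : ℕ)
    (hD : ∀ v, G.degree v ≤ D) : AC G ≤ 5 * ((D + 1) ^ 6 + 1) * Fintype.card V := by
  obtain ⟨l, h1, h2, h3⟩ := ham hG
  obtain ⟨r⟩ := hG.nonempty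
  have hlen : l.length = Fintype.card V := by
    rw [← List.toFinset_card_of_nodup h1, ← Finset.card_univ]
    congr 1
    ext x; simp [h2]
  refine path_strategy G D hD _ (fun i => l.getD i r) ?_ ?_ ?_
  · intro i hi j hj h
    rw [← hlen] at hi hj
    beta_reduce at h
    rw [List.getD_eq_getElem _ _ hi, List.getD_eq_getElem _ _ hj] at h
    exact (h1.getElem_inj_iff).1 h
  · intro x
    obtain ⟨i, hi, h⟩ := List.getElem_of_mem (h2 x)
    exact ⟨i, by omega, by beta_reduce; rw [List.getD_eq_getElem _ _ hi, h]⟩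
  · intro i hi
    rw [← hlen] at hi
    beta_reduce
    rw [List.getD_eq_getElem _ _ hi, List.getD_eq_getElem _ _ (by omega)]
    exact List.isChain_iff_getElem.1 h3 i hi

end ham

section star

variable {V : Type*}

theorem vtree [Fintype V] {G : SimpleGraph V} (hG : G.Connected) (r : V) :
    ∃ (q : V → V) (e : V → ℕ) (h : V → ℕ) (W : V → Set V),
      (∀ v, e v ≤ Fintype.card V) ∧
      (∀ v, ¬ G.Adj r v → e v = 0 → v = r) ∧
      (∀ v, ¬ G.Adj r v → 0 < e v → ¬ G.Adj r (q v) ∧ e (q v) + 1 = e v ∧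
        SwapIn G (W v) v (q v) ∧
        ∀ z ∈ W v, h z = e v ∨ h z = e v + 1 ∨ (e v = 1 ∧ h z = 0)) := by
  have hp : ∀ v, ∃ p, v ≠ r → G.Adj v p ∧ G.dist r p + 1 = G.dist r v := by
    intro v
    by_cases h : v = r
    · exact ⟨v, fun h' => absurd h h'⟩
    · obtain ⟨p, hp⟩ := exists_parent hG r v h
      exact ⟨p, fun _ => hp⟩
  choose p hp using hp
  have hN : ∀ v, G.Adj r v ↔ G.dist r v = 1 := fun v => SimpleGraph.dist_eq_one_iff_adj.symm
  have h0 : ∀ v, G.dist r v = 0 → v = r := fun v h => (hG.dist_eq_zero_iff.1 h).symm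
  have hr0 : G.dist r r = 0 := SimpleGraph.dist_self
  refine ⟨fun v => if G.dist r v = 2 then r else p v, fun v => G.dist r v - 1, G.dist r,
    fun v => if G.dist r v = 2 then {v, p v, r} else {v, p v}, ?_, ?_, ?_⟩
  · intro v
    obtain ⟨w, hw, hl⟩ := hG.exists_path_of_dist r v
    have := hw.length_lt
    beta_reduce
    omega
  · intro v hv he
    rw [hN] at hv
    exact h0 v (by beta_reduce at he; omega)
  · intro v hv he
    rw [hN] at hv
    beta_reduce at he
    have hvr : v ≠ r := by rintro rfl; omega
    obtain ⟨a1, a2⟩ := hp v hvr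
    by_cases h2 : G.dist r v = 2
    · simp only [h2, if_true]
      have hpr : G.Adj r (p v) := (hN _).2 (by omega)
      refine ⟨by simp, by simp, swapIn_two a1 hpr.symm hvr, ?_⟩
      rintro z (rfl | rfl | h)
      · right; left; omega
      · left; omega
      · right; right; exact ⟨trivial, by rw [Set.mem_singleton_iff.1 h]; exact hr0⟩
    · simp only [h2, if_false]
      refine ⟨by rw [hN]; omega, by omega, swapIn_one a1, ?_⟩
      rintro z (rfl | rfl) <;> omega

theorem iter_level {G : SimpleGraph V} {r : V} {q : V → V} {e : V → ℕ}
    (hq : ∀ v, ¬ G.Adj r v → 0 < e v → ¬ G.Adj r (q v) ∧ e (q v) + 1 = e v) (v : V)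
    (hv : ¬ G.Adj r v) (k : ℕ) (hk : k ≤ e v) :
    ¬ G.Adj r (q^[k] v) ∧ e (q^[k] v) + k = e v := by
  induction k with
  | zero => simpa using hv
  | succ k ih =>
    obtain ⟨a, b⟩ := ih (by omega)
    rw [Function.iterate_succ_apply']
    obtain ⟨c, d⟩ := hq _ a (by omega)
    exact ⟨c, by omega⟩

theorem phaseA {G : SimpleGraph V} {r : V} {q : V → V} {e h : V → ℕ} {W : V → Set V}
    (hq : ∀ v, ¬ G.Adj r v → 0 < e v → ¬ G.Adj r (q v) ∧ e (q v) + 1 = e v ∧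
        SwapIn G (W v) v (q v) ∧
        ∀ z ∈ W v, h z = e v ∨ h z = e v + 1 ∨ (e v = 1 ∧ h z = 0))
    (n m : ℕ) (u : ℕ → V) (hu : ∀ i < m, ¬ G.Adj r (u i))
    (huinj : ∀ i < m, ∀ j < m, u i = u j → i = j)
    (hmono : ∀ i j, i ≤ j → j < m → e (u i) ≤ e (u j)) (τ : ℕ) :
    ∃ l : List (Equiv.Perm V), l.length = 5 ∧ Valid G l ∧ (∀ x, G.Adj r x → mv l x = x) ∧
      ∀ i < m, τ + 1 ≤ n + 2 * i →
        mv l (q^[e (u i) - (n + 2 * i - τ)] (u i)) =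
          q^[e (u i) - (n + 2 * i - (τ + 1))] (u i) := by
  set I := (Finset.range m).filter
    (fun i => τ + 1 ≤ n + 2 * i ∧ n + 2 * i - τ ≤ e (u i)) with hI
  have hmem : ∀ i, i ∈ I ↔ i < m ∧ τ + 1 ≤ n + 2 * i ∧ n + 2 * i - τ ≤ e (u i) := by
    intro i; rw [hI, Finset.mem_filter, Finset.mem_range]
  set x : ℕ → V := fun i => q^[e (u i) - (n + 2 * i - τ)] (u i) with hx
  have lev : ∀ i ∈ I, ¬ G.Adj r (x i) ∧ e (x i) = n + 2 * i - τ := by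
    intro i hi
    rw [hmem] at hi
    obtain ⟨a, b⟩ := iter_level (G := G) (r := r) (fun v h1 h2 => ⟨(hq v h1 h2).1, (hq v h1 h2).2.1⟩)
      (u i) (hu i hi.1) (e (u i) - (n + 2 * i - τ)) (by omega)
    exact ⟨a, by simp only [hx]; omega⟩
  have Q : ∀ i ∈ I, ¬ G.Adj r (q (x i)) ∧ e (q (x i)) + 1 = e (x i) ∧
        SwapIn G (W (x i)) (x i) (q (x i)) ∧
        ∀ z ∈ W (x i), h z = e (x i) ∨ h z = e (x i) + 1 ∨ (e (x i) = 1 ∧ h z = 0) := by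
    intro i hi
    have := lev i hi
    rw [hmem] at hi
    exact hq _ this.1 (by omega)
  obtain ⟨l, a1, a2, a3, -, a5, -⟩ := par_class (G := G) I x (fun i => q (x i)) (fun i => W (x i))
    (fun i hi => (Q i hi).2.2.1) (fun i hi j hj hij => by
      rw [Set.disjoint_left]
      intro z hz1 hz2
      have b1 := (Q i hi).2.2.2 z hz1
      have b2 := (Q j hj).2.2.2 z hz2
      have c1 := lev i hi
      have c2 := lev j hj
      rw [hmem] at hi hj
      omega)
  refine ⟨l, a1, a2, ?_, ?_⟩
  · intro z hz
    apply a5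
    intro i hi
    constructor
    · rintro rfl; exact (lev i hi).1 hz
    · rintro rfl; exact (Q i hi).1 hz
  · intro i him hi
    by_cases hiI : i ∈ I
    · have := a3 i hiI
      rw [hmem] at hiI
      rw [show e (u i) - (n + 2 * i - (τ + 1)) = (e (u i) - (n + 2 * i - τ)) + 1 by omega,
        Function.iterate_succ_apply']
      exact this
    · have hlt : e (u i) < n + 2 * i - τ := by
        by_contra hc
        exact hiI ((hmem i).2 ⟨him, hi, by omega⟩)
      rw [show e (u i) - (n + 2 * i - (τ + 1)) = 0 by omega,
        show e (u i) - (n + 2 * i - τ) = 0 by omega]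
      simp only [Function.iterate_zero, id]
      apply a5
      intro j hj
      have l1 := lev j hj
      have l2 := Q j hj
      have hj' := (hmem j).1 hj
      have hij : i ≠ j := by rintro rfl; exact hiI hj
      rcases Nat.lt_or_gt_of_ne hij with hlt2 | hlt2
      · constructor
        · intro hc; rw [← hc] at l1; omega
        · intro hc; rw [← hc] at l2; omega
      · have hm := hmono j i hlt2.le him
        constructor
        · intro hc
          have hxj : x j = u j := by
            have l3 := l1
            rw [← hc] at l3
            simp only [hx]
            rw [show e (u j) - (n + 2 * j - τ) = 0 by omega]
            rfl
          exact hij (huinj i him j hj'.1 (hc.trans hxj))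
        · intro hc; rw [← hc] at l2; omega

theorem met_end {G : SimpleGraph V} (l : List (Equiv.Perm V)) (a b : V)
    (h : G.Adj (mv l a) (mv l b)) : Met G l a b := by
  have := (met_append G l [] a b).2 (Or.inr h)
  simpa using this

theorem sort_enum (r : V) (e : V → ℕ) (m : ℕ) : ∀ S : Finset V, S.card = m →
    ∃ u : ℕ → V, (∀ i < m, u i ∈ S) ∧ (∀ i < m, ∀ j < m, u i = u j → i = j) ∧
      (∀ x ∈ S, ∃ i < m, u i = x) ∧ ∀ i j, i ≤ j → j < m → e (u i) ≤ e (u j) := by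
  induction m with
  | zero =>
    intro S hS
    rw [Finset.card_eq_zero] at hS
    subst hS
    exact ⟨fun _ => r, by simp, by simp, by simp, by simp⟩
  | succ m ih =>
    intro S hS
    obtain ⟨x, hx, hmax⟩ := Finset.exists_max_image S e (Finset.card_pos.1 (by omega))
    obtain ⟨u, h1, h2, h3, h4⟩ := ih (S.erase x) (by rw [Finset.card_erase_of_mem hx]; omega)
    simp only [Finset.mem_erase] at h1 h3
    refine ⟨fun i => if i < m then u i else x, ?_, ?_, ?_, ?_⟩
    · intro i hi
      by_cases him : i < m
      · simpa [him] using (h1 i him).2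
      · simpa [him] using hx
    · intro i hi j hj hij
      by_cases him : i < m <;> by_cases hjm : j < m <;> simp only [him, hjm, if_true, if_false] at hij
      · exact h2 i him j hjm hij
      · exact absurd hij (h1 i him).1
      · exact absurd hij.symm (h1 j hjm).1
      · omega
    · intro y hy
      by_cases hyx : y = x
      · exact ⟨m, by omega, by simp [hyx]⟩
      · obtain ⟨i, hi, rfl⟩ := h3 y ⟨hyx, hy⟩
        exact ⟨i, by omega, by simp [hi]⟩
    · intro i j hij hj
      by_cases hjm : j < m
      · simp only [hjm, if_true, show i < m by omega]
        exact h4 i j hij hjm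
      · simp only [hjm, if_false]
        by_cases him : i < m
        · simp only [him, if_true]
          exact hmax _ (h1 i him).2
        · simp only [him, if_false]; exact le_rfl

/-- every agent outside the star visits the root while the star is fixed -/
theorem meet_stage [Fintype V] {G : SimpleGraph V} (hG : G.Connected) (r : V) :
    ∃ l : List (Equiv.Perm V), l.length ≤ 15 * Fintype.card V ∧ Valid G l ∧
      ∀ a b, G.Adj r a → ¬ G.Adj r b → Met G l a b := by
  obtain ⟨q, e, h, W, he, h0, hq⟩ := vtree hG r
  set n := Fintype.card V with hn
  have hnpos : 0 < n := Fintype.card_pos_iff.2 ⟨r⟩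
  set S := Finset.univ.filter (fun v => ¬ G.Adj r v) with hS
  obtain ⟨u, u1, u2, u3, u4⟩ := sort_enum r e S.card S rfl
  set m := S.card with hm
  have hmn : m ≤ n := Finset.card_le_univ S
  have hu : ∀ i < m, ¬ G.Adj r (u i) := fun i hi => by simpa [hS] using u1 i hi
  have hq' : ∀ v, ¬ G.Adj r v → 0 < e v → ¬ G.Adj r (q v) ∧ e (q v) + 1 = e v :=
    fun v h1 h2 => ⟨(hq v h1 h2).1, (hq v h1 h2).2.1⟩
  have main : ∀ T, ∃ l : List (Equiv.Perm V), l.length = 5 * T ∧ Valid G l ∧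
      (∀ x, G.Adj r x → mv l x = x) ∧
      (∀ i < m, T ≤ n + 2 * i → mv l (u i) = q^[e (u i) - (n + 2 * i - T)] (u i)) ∧
      (∀ i < m, n + 2 * i ≤ T → ∀ x, G.Adj r x → Met G l (u i) x) := by
    intro T
    induction T with
    | zero =>
      refine ⟨[], rfl, fun σ h => by simp at h, fun _ _ => rfl, ?_, ?_⟩
      · intro i hi _
        have := he (u i)
        rw [show e (u i) - (n + 2 * i - 0) = 0 by omega]
        rfl
      · intro i hi hle; omega
    | succ T ih =>
      obtain ⟨l, a1, a2, a3, a4, a5⟩ := ih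
      obtain ⟨l', b1, b2, b3, b4⟩ := phaseA hq n m u hu u2 u4 T
      have fx : ∀ x, G.Adj r x → mv (l ++ l') x = x := by
        intro x hx
        rw [mv_append, Equiv.Perm.mul_apply, a3 x hx, b3 x hx]
      have fu : ∀ i < m, T + 1 ≤ n + 2 * i →
          mv (l ++ l') (u i) = q^[e (u i) - (n + 2 * i - (T + 1))] (u i) := by
        intro i hi hT
        rw [mv_append, Equiv.Perm.mul_apply, a4 i hi (by omega), b4 i hi hT]
      refine ⟨l ++ l', by rw [List.length_append]; omega, valid_append a2 b2, fx, fu, ?_⟩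
      intro i hi hle x hx
      by_cases hlt : n + 2 * i ≤ T
      · rw [met_append]; exact Or.inl (a5 i hi hlt x hx)
      · apply met_end
        rw [fx x hx, fu i hi (by omega), show n + 2 * i - (T + 1) = 0 by omega, Nat.sub_zero]
        obtain ⟨c1, c2⟩ := iter_level hq' (u i) (hu i hi) (e (u i)) le_rfl
        rw [h0 _ c1 (by omega)]
        exact hx
  obtain ⟨l, a1, a2, a3, a4, a5⟩ := main (n + 2 * m)
  refine ⟨l, by omega, a2, ?_⟩
  intro a b ha hb
  obtain ⟨i, hi, rfl⟩ := u3 b (by simp [hS, hb])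
  exact met_symm (a5 i hi (by omega) a ha)

theorem exchange_aux [Fintype V] {G : SimpleGraph V} (hG : G.Connected) (r : V)
    (S : Finset V) (hS : ∀ x ∈ S, ¬ G.Adj r x) (w : ℕ → V)
    (hw : ∀ i < S.card, G.Adj r (w i))
    (hwinj : ∀ i < S.card, ∀ j < S.card, w i = w j → i = j) :
    ∃ l : List (Equiv.Perm V), l.length ≤ 18 * Fintype.card V ∧ Valid G l ∧
      (∀ a ∈ S, G.Adj r (mv l a)) ∧
      ∀ x, G.Adj r x → (∀ i < S.card, w i ≠ x) → mv l x = x := by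
  obtain ⟨q, e, h, W, he, h0, hq⟩ := vtree hG r
  set n := Fintype.card V with hn
  have hnpos : 0 < n := Fintype.card_pos_iff.2 ⟨r⟩
  obtain ⟨u, u1, u2, u3, u4⟩ := sort_enum r e S.card S rfl
  have hmn : S.card ≤ n := Finset.card_le_univ S
  set m := S.card with hm
  have hu : ∀ i < m, ¬ G.Adj r (u i) := fun i hi => hS _ (u1 i hi)
  have hq' : ∀ v, ¬ G.Adj r v → 0 < e v → ¬ G.Adj r (q v) ∧ e (q v) + 1 = e v :=
    fun v h1 h2 => ⟨(hq v h1 h2).1, (hq v h1 h2).2.1⟩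
  have main : ∀ T, ∃ l : List (Equiv.Perm V), l.length = 6 * T ∧ Valid G l ∧
      (∀ x, G.Adj r x → (∀ i < m, w i ≠ x) → mv l x = x) ∧
      (∀ i < m, T < n + 2 * i → mv l (u i) = q^[e (u i) - (n + 2 * i - T)] (u i)) ∧
      (∀ i < m, n + 2 * i ≤ T → mv l (u i) = w i) := by
    intro T
    induction T with
    | zero =>
      refine ⟨[], rfl, fun σ h => by simp at h, fun _ _ _ => rfl, ?_, ?_⟩
      · intro i hi _
        have := he (u i)
        rw [show e (u i) - (n + 2 * i - 0) = 0 by omega]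
        rfl
      · intro i hi hle; omega
    | succ T ih =>
      obtain ⟨l, a1, a2, a3, a4, a5⟩ := ih
      obtain ⟨l', b1, b2, b3, b4⟩ := phaseA hq n m u hu u2 u4 T
      have fx : ∀ x, G.Adj r x → (∀ i < m, w i ≠ x) → mv (l ++ l') x = x := by
        intro x hx hx2
        rw [mv_append, Equiv.Perm.mul_apply, a3 x hx hx2, b3 x hx]
      have fu : ∀ i < m, T + 1 ≤ n + 2 * i →
          mv (l ++ l') (u i) = q^[e (u i) - (n + 2 * i - (T + 1))] (u i) := by
        intro i hi hT
        rw [mv_append, Equiv.Perm.mul_apply, a4 i hi (by omega), b4 i hi hT]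
      have fw : ∀ i < m, n + 2 * i ≤ T → mv (l ++ l') (u i) = w i := by
        intro i hi hT
        rw [mv_append, Equiv.Perm.mul_apply, a5 i hi hT, b3 _ (hw i hi)]
      by_cases hj : ∃ j < m, n + 2 * j = T + 1
      · obtain ⟨j, hjm, hjT⟩ := hj
        have hrw := (hw j hjm).ne
        refine ⟨(l ++ l') ++ [Equiv.swap r (w j)], by simp; omega,
          valid_append (valid_append a2 b2) ?_, ?_, ?_, ?_⟩
        · intro σ hσ
          simp at hσ
          subst hσ
          exact matching_swap (hw j hjm)
        · intro x hx hx2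
          rw [mv_append, Equiv.Perm.mul_apply, fx x hx hx2]
          simp only [mv, one_mul]
          exact Equiv.swap_apply_of_ne_of_ne hx.ne.symm (hx2 j hjm).symm
        · intro i hi hT
          rw [mv_append, Equiv.Perm.mul_apply, fu i hi (by omega)]
          simp only [mv, one_mul]
          obtain ⟨c1, c2⟩ := iter_level hq' (u i) (hu i hi)
            (e (u i) - (n + 2 * i - (T + 1))) (by omega)
          apply Equiv.swap_apply_of_ne_of_ne
          · intro hc
            have er : e r = 0 := by
              by_contra her
              have := hq r (by simp) (by omega)
              obtain ⟨d1, d2⟩ := iter_level hq' r (by simp) (e r) le_rfl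
              have d3 := h0 _ d1 (by omega)
              rw [d3] at d2
              omega
            rw [hc, er] at c2
            have c3 : e (u i) = 0 := by omega
            have c4 := u4 j i (by omega) hi
            have c5 := h0 _ (hu i hi) c3
            have c6 := h0 _ (hu j hjm) (by omega)
            have := u2 i hi j hjm (c5.trans c6.symm)
            omega
          · intro hc
            rw [hc] at c1
            exact c1 (hw j hjm)
        · intro i hi hT
          rw [mv_append, Equiv.Perm.mul_apply]
          simp only [mv, one_mul]
          by_cases hlt : n + 2 * i ≤ T
          · rw [fw i hi hlt]
            apply Equiv.swap_apply_of_ne_of_ne (hw i hi).ne.symm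
            intro hc
            have := hwinj i hi j hjm hc
            omega
          · have hij : i = j := by omega
            subst hij
            rw [fu i hi (by omega), show n + 2 * i - (T + 1) = 0 by omega, Nat.sub_zero]
            obtain ⟨c1, c2⟩ := iter_level hq' (u i) (hu i hi) (e (u i)) le_rfl
            rw [h0 _ c1 (by omega)]
            simp
      · refine ⟨(l ++ l') ++ [1], by simp; omega,
          valid_append (valid_append a2 b2) ?_, ?_, ?_, ?_⟩
        · intro σ hσ
          simp at hσ
          subst hσ
          exact matching_one G
        · intro x hx hx2
          rw [mv_append, Equiv.Perm.mul_apply, fx x hx hx2]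
          simp [mv]
        · intro i hi hT
          rw [mv_append, Equiv.Perm.mul_apply, fu i hi (by omega)]
          simp [mv]
        · intro i hi hT
          have : n + 2 * i ≠ T + 1 := fun h => hj ⟨i, hi, h⟩
          rw [mv_append, Equiv.Perm.mul_apply, fw i hi (by omega)]
          simp [mv]
  obtain ⟨l, a1, a2, a3, a4, a5⟩ := main (n + 2 * m)
  refine ⟨l, by omega, a2, ?_, a3⟩
  intro a ha
  obtain ⟨i, hi, rfl⟩ := u3 a ha
  rw [a5 i hi (by omega)]
  exact hw i hi

theorem exchange [Fintype V] {G : SimpleGraph V} (hG : G.Connected) (r : V)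
    (S : Finset V) (hS : S.card ≤ G.degree r) :
    ∃ l : List (Equiv.Perm V), l.length ≤ 18 * Fintype.card V ∧ Valid G l ∧
      (∀ a ∈ S, G.Adj r (mv l a)) := by
  set N := G.neighborFinset r with hN
  have hNm : ∀ x, x ∈ N ↔ G.Adj r x := fun x => by simp [hN]
  have hc : (S \ N).card ≤ (N \ S).card := by
    have h1 := Finset.card_sdiff_add_card_inter S N
    have h2 := Finset.card_sdiff_add_card_inter N S
    rw [Finset.inter_comm] at h2
    have h3 : N.card = G.degree r := SimpleGraph.card_neighborFinset_eq_degree G r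
    omega
  obtain ⟨w, w1, w2, -, -⟩ := sort_enum r (fun _ => 0) _ (N \ S) rfl
  obtain ⟨l, a1, a2, a3, a4⟩ := exchange_aux hG r (S \ N)
    (fun x hx => by rw [Finset.mem_sdiff, hNm] at hx; exact hx.2) w
    (fun i hi => by
      have := w1 i (by omega)
      rw [Finset.mem_sdiff, hNm] at this; exact this.1)
    (fun i hi j hj => w2 i (by omega) j (by omega))
  refine ⟨l, a1, a2, ?_⟩
  intro a ha
  by_cases haN : G.Adj r a
  · rw [a4 a haN]
    · exact haN
    · intro i hi h
      have := w1 i (by omega)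
      rw [Finset.mem_sdiff, h] at this
      exact this.2 ha
  · exact a3 a (by rw [Finset.mem_sdiff, hNm]; exact ⟨ha, haN⟩)

theorem internal {G : SimpleGraph V} (r : V) (N : Finset V) (hN : ∀ x ∈ N, G.Adj r x) :
    ∃ l : List (Equiv.Perm V), l.length = 2 * N.card ∧ Valid G l ∧ mv l = 1 ∧
      ∀ a ∈ N, ∀ b, G.Adj r b → a ≠ b → Met G l a b := by
  induction N using Finset.induction_on with
  | empty => exact ⟨[], rfl, fun σ h => by simp at h, rfl, by simp⟩
  | insert w N hw ih =>
    obtain ⟨l, a1, a2, a3, a4⟩ := ih (fun x hx => hN x (by simp [hx]))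
    have hrw := hN w (by simp)
    refine ⟨l ++ [Equiv.swap r w, Equiv.swap r w], ?_, valid_append a2 ?_, ?_, ?_⟩
    · rw [Finset.card_insert_of_notMem hw, List.length_append, a1]; simp; omega
    · intro σ hσ
      simp at hσ
      subst hσ
      exact matching_swap hrw
    · rw [mv_append, a3]; simp [mv]
    · intro a ha b hb hab
      rw [met_append]
      rcases Finset.mem_insert.1 ha with rfl | ha'
      · right
        right
        left
        rw [a3]
        simp only [Equiv.Perm.coe_one, id, Equiv.swap_apply_right]
        rw [Equiv.swap_apply_of_ne_of_ne hb.ne.symm hab.symm]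
        exact hb
      · exact Or.inl (a4 a ha' b hb hab)

theorem full_stage [Fintype V] {G : SimpleGraph V} (hG : G.Connected) (r : V) :
    ∃ l : List (Equiv.Perm V), l.length ≤ 17 * Fintype.card V ∧ Valid G l ∧
      ∀ a b, G.Adj r a → a ≠ b → Met G l a b := by
  obtain ⟨l, a1, a2, a3, a4⟩ := internal (G := G) r (G.neighborFinset r) (fun x hx => by simpa using hx)
  obtain ⟨l', b1, b2, b3⟩ := meet_stage hG r
  have hc : (G.neighborFinset r).card ≤ Fintype.card V := Finset.card_le_univ _
  refine ⟨l ++ l', by rw [List.length_append]; omega, valid_append a2 b2, ?_⟩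
  intro a b ha hab
  rw [met_append, a3]
  by_cases hb : G.Adj r b
  · exact Or.inl (a4 a (by simpa using ha) b hb hab)
  · exact Or.inr (b3 a b ha hb)

theorem AC_star [Fintype V] {G : SimpleGraph V} (hG : G.Connected) (r : V)
    (hd : 0 < G.degree r) :
    AC G * G.degree r ≤ 70 * Fintype.card V ^ 2 := by
  set d := G.degree r with hdd
  set n := Fintype.card V with hn
  obtain ⟨F, f1, f2, f3⟩ := full_stage hG r
  have main : ∀ k : ℕ, ∃ (l : List (Equiv.Perm V)) (S : Finset V), l.length ≤ 35 * n * k ∧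
      Valid G l ∧ (k * d ≤ S.card ∨ S = Finset.univ) ∧
      ∀ a ∈ S, ∀ b, a ≠ b → Met G l a b := by
    intro k
    induction k with
    | zero => exact ⟨[], ∅, by simp, fun σ h => by simp at h, by simp, by simp⟩
    | succ k ih =>
      obtain ⟨l, S, a1, a2, a3, a4⟩ := ih
      have hsub : ∃ U ⊆ Sᶜ, U.card ≤ d ∧ (U.card = d ∨ U = Sᶜ) := by
        by_cases hle : d ≤ (Sᶜ).card
        · obtain ⟨U, hU, hc⟩ := Finset.exists_subset_card_eq hle
          exact ⟨U, hU, hc.le, Or.inl hc⟩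
        · exact ⟨Sᶜ, subset_rfl, by omega, Or.inr rfl⟩
      obtain ⟨U, hU, hUd, hU2⟩ := hsub
      obtain ⟨X, x1, x2, x3⟩ := exchange hG r (U.image (mv l)) (Finset.card_image_le.trans hUd)
      refine ⟨l ++ (X ++ F), S ∪ U, ?_, valid_append a2 (valid_append x2 f2), ?_, ?_⟩
      · rw [List.length_append, List.length_append]
        have : 35 * n * (k + 1) = 35 * n * k + 35 * n := by ring
        omega
      · rcases hU2 with h | h
        · rcases a3 with h3 | h3
          · left
            rw [Finset.card_union_of_disjoint, add_mul]
            · omega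
            · rw [Finset.disjoint_left]
              intro z hz hz2
              exact (Finset.mem_compl.1 (hU hz2)) hz
          · right; rw [h3]; simp
        · right; rw [h]; simp
      · intro a ha b hab
        rw [met_append]
        rcases Finset.mem_union.1 ha with h | h
        · exact Or.inl (a4 a h b hab)
        · right
          rw [met_append]
          right
          apply f3
          · exact x3 _ (Finset.mem_image_of_mem _ h)
          · intro hc
            exact hab ((mv l).injective ((mv X).injective hc))
  obtain ⟨l, S, a1, a2, a3, a4⟩ := main (n / d + 1)
  have hSu : S = Finset.univ := by
    rcases a3 with h | h
    · exfalso
      have h1 : S.card ≤ n := Finset.card_le_univ S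
      have h2 := Nat.lt_div_mul_add (a := n) hd
      rw [add_mul] at h
      omega
    · exact h
  have hAC : AC G ≤ l.length := AC_le l a2 (fun a b hab => a4 a (by simp [hSu]) b hab)
  have hdn : d ≤ n := by
    rw [hdd, ← SimpleGraph.card_neighborFinset_eq_degree]; exact Finset.card_le_univ _
  calc AC G * d ≤ (35 * n * (n / d + 1)) * d := Nat.mul_le_mul_right _ (hAC.trans a1)
    _ = 35 * n * (n / d * d + d) := by ring
    _ ≤ 35 * n * (n + n) := by
      have := Nat.div_mul_le_self n d
      gcongr
    _ = 70 * n ^ 2 := by ring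

end star

end AcqProof

theorem AcqProof.numeric (n : ℕ) (hn : 2 ≤ n) :
    Real.log n * ((Real.log n + 1) ^ 6 + 1) ≤ 2 * 7 ^ 7 * n := by
  have hn0 : (0 : ℝ) < n := by positivity
  have hlog : 0 ≤ Real.log n := Real.log_natCast_nonneg n
  set y : ℝ := (n : ℝ) ^ ((1 : ℝ) / 7) with hy
  have hy0 : 0 < y := Real.rpow_pos_of_pos hn0 _
  have hy7 : y ^ 7 = n := by
    rw [hy, ← Real.rpow_natCast, ← Real.rpow_mul hn0.le]
    norm_num
  have h1 : Real.log n = 7 * Real.log y := by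
    rw [hy, Real.log_rpow hn0]; ring
  have h2 := Real.log_le_sub_one_of_pos hy0
  have h3 : Real.log n + 1 ≤ 7 * y := by linarith
  have h4 : (Real.log n + 1) ^ 7 ≤ (7 * y) ^ 7 := by gcongr
  have h5 : (1 : ℝ) ≤ (Real.log n + 1) ^ 6 := one_le_pow₀ (by linarith)
  have h6 : (7 * y) ^ 7 = 7 ^ 7 * n := by rw [mul_pow, hy7]
  calc Real.log n * ((Real.log n + 1) ^ 6 + 1)
      ≤ (Real.log n + 1) * ((Real.log n + 1) ^ 6 + (Real.log n + 1) ^ 6) := by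
        gcongr
        linarith
    _ = 2 * (Real.log n + 1) ^ 7 := by ring
    _ ≤ 2 * 7 ^ 7 * n := by rw [h6] at h4; linarith

/-- General upper bound: there is a constant `C > 0` such that every connected graph on
`n ≥ 2` vertices satisfies `AC(G) ≤ C · n² / log n`. -/
theorem AC_general_upper_bound :
    ∃ C : ℝ, 0 < C ∧ ∀ (V : Type) [Fintype V] (G : SimpleGraph V),
      G.Connected → 2 ≤ Fintype.card V →
      (AC G : ℝ) ≤ C * (Fintype.card V : ℝ) ^ 2 / Real.log (Fintype.card V) := by
  refine ⟨10 * 7 ^ 7, by norm_num, ?_⟩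
  intro V _ G hG hn
  have hlog : 0 < Real.log (Fintype.card V) := Real.log_pos (by exact_mod_cast hn)
  obtain ⟨r0⟩ := hG.nonempty
  obtain ⟨r, -, hr⟩ := Finset.exists_max_image Finset.univ (fun v => G.degree v)
    ⟨r0, Finset.mem_univ _⟩
  have : Nontrivial V := Fintype.one_lt_card_iff_nontrivial.1 (by omega)
  have hd : 0 < G.degree r := hG.preconnected.degree_pos_of_nontrivial r
  have hnum := AcqProof.numeric (Fintype.card V) hn
  rw [le_div_iff₀ hlog]
  by_cases hc : Real.log (Fintype.card V) ≤ (G.degree r : ℝ)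
  · have h := AcqProof.AC_star hG r hd
    have h' : (AC G : ℝ) * G.degree r ≤ 70 * (Fintype.card V : ℝ) ^ 2 := by exact_mod_cast h
    have h1 : (AC G : ℝ) * Real.log (Fintype.card V) ≤ AC G * G.degree r := by gcongr
    have h2 : (0 : ℝ) ≤ (Fintype.card V : ℝ) ^ 2 := by positivity
    linarith
  · push Not at hc
    have h := AcqProof.AC_bounded hG (G.degree r) (fun v => hr v (Finset.mem_univ _))
    have h' : (AC G : ℝ) ≤ 5 * (((G.degree r : ℝ) + 1) ^ 6 + 1) * Fintype.card V := by
      exact_mod_cast h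
    have h1 : (AC G : ℝ) ≤
        5 * ((Real.log (Fintype.card V) + 1) ^ 6 + 1) * Fintype.card V := by
      refine h'.trans ?_
      gcongr
    calc (AC G : ℝ) * Real.log (Fintype.card V)
        ≤ 5 * ((Real.log (Fintype.card V) + 1) ^ 6 + 1) * Fintype.card V *
          Real.log (Fintype.card V) := by gcongr
      _ = 5 * Fintype.card V * (Real.log (Fintype.card V) *
          ((Real.log (Fintype.card V) + 1) ^ 6 + 1)) := by ring
      _ ≤ 5 * Fintype.card V * (2 * 7 ^ 7 * Fintype.card V) := by gcongr
      _ = 10 * 7 ^ 7 * (Fintype.card V : ℝ) ^ 2 := by ring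
end

section
/- Let G = (V,E) be a finite tree, and let S, T ⊆ V be two subsets of equal size k = |S| = |T|. Let ℓ = max_{v ∈ S, u ∈ T} dist(v,u) be the maximal distance between a vertex in S and a vertex in T. Then there is a strategy of ℓ + 2(k−1) rounds of matchings in G (in each round a matching is chosen and the agents on the endpoints of each matching edge are swapped) after which the set of vertices occupied by the agents that initially occupied S is exactly T. -/
open scoped Classical

/-- One round inside `U` takes the occupied set `A` to `B`. -/
def TRStep {V : Type*} [DecidableEq V] (G : SimpleGraph V) (U A B : Finset V) : Prop :=
  ∃ σ : Equiv.Perm V, IsMatchingSwap G σ ∧ (∀ v, v ∉ U → σ v = v) ∧ A.image σ = B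

/-- `A` is taken to `B` in `N` rounds inside `U`. -/
def TRReach {V : Type*} [DecidableEq V] (G : SimpleGraph V) (U : Finset V) (N : ℕ)
    (S T : Finset V) : Prop :=
  ∃ A : ℕ → Finset V, A 0 = S ∧ A N = T ∧ ∀ i, TRStep G U (A i) (A (i + 1))

lemma IsMatchingSwap.invol {V : Type*} {G : SimpleGraph V} {σ : Equiv.Perm V}
    (h : IsMatchingSwap G σ) (v : V) : σ (σ v) = v := by
  rcases h v with h | h
  · rw [h, h]
  · exact h.2

lemma TRStep.refl {V : Type*} [DecidableEq V] (G : SimpleGraph V) (U A : Finset V) :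
    TRStep G U A A :=
  ⟨1, fun v => Or.inl rfl, fun v _ => rfl, by ext; simp⟩

lemma TRStep.symm {V : Type*} [DecidableEq V] {G : SimpleGraph V} {U A B : Finset V}
    (h : TRStep G U A B) : TRStep G U B A := by
  obtain ⟨σ, h1, h2, h3⟩ := h
  refine ⟨σ, h1, h2, ?_⟩
  rw [← h3, Finset.image_image]
  ext x
  simp [h1.invol]

lemma TRStep.mono {V : Type*} [DecidableEq V] {G : SimpleGraph V} {U U' A B : Finset V}
    (h : TRStep G U A B) (hU : U ⊆ U') : TRStep G U' A B := by
  obtain ⟨σ, h1, h2, h3⟩ := h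
  exact ⟨σ, h1, fun v hv => h2 v (fun h => hv (hU h)), h3⟩

lemma TRStep.subset {V : Type*} [DecidableEq V] {G : SimpleGraph V} {U A B : Finset V}
    (h : TRStep G U A B) (hA : A ⊆ U) : B ⊆ U := by
  obtain ⟨σ, h1, h2, h3⟩ := h
  intro b hb
  by_contra hbU
  rw [← h3, Finset.mem_image] at hb
  obtain ⟨a, ha, rfl⟩ := hb
  have := h2 _ hbU
  rw [h1.invol] at this
  rw [← this] at hbU
  exact hbU (hA ha)

lemma TRReach.symm {V : Type*} [DecidableEq V] {G : SimpleGraph V} {U : Finset V} {N : ℕ}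
    {S T : Finset V} (h : TRReach G U N S T) : TRReach G U N T S := by
  obtain ⟨A, h0, hN, hs⟩ := h
  refine ⟨fun i => A (N - i), by simpa using hN, by simpa using h0, fun i => ?_⟩
  by_cases hi : i < N
  · have := (hs (N - (i + 1))).symm
    rwa [show N - (i + 1) + 1 = N - i by omega] at this
  · simp only [show N - i = 0 by omega, show N - (i + 1) = 0 by omega]
    exact TRStep.refl _ _ _

lemma TRStep.insert {V : Type*} [DecidableEq V] {G : SimpleGraph V} {U A B : Finset V}
    (h : TRStep G U A B) {p q : V} (hpq : p = q ∨ G.Adj p q) (hp : p ∈ U) (hq : q ∈ U)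
    (hpA : p ∉ A) (hqA : q ∉ A) (hpB : p ∉ B) (hqB : q ∉ B) :
    TRStep G U (insert p A) (insert q B) := by
  obtain ⟨σ, h1, h2, rfl⟩ := h
  have hi := h1.invol
  have hpB' : σ p ∉ A := fun h => hpB (Finset.mem_image.2 ⟨_, h, hi p⟩)
  have hqB' : σ q ∉ A := fun h => hqB (Finset.mem_image.2 ⟨_, h, hi q⟩)
  let f : V → V := fun v => if v = p then q else if v = q then p else
    if v ∈ A ∨ σ v ∈ A then σ v else v
  have hf : Function.Involutive f := by
    intro v
    by_cases hvp : v = p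
    · subst hvp
      by_cases hqv : q = v <;> simp [f, hqv]
    by_cases hvq : v = q
    · subst hvq
      simp [f, hvp]
    by_cases hvA : v ∈ A ∨ σ v ∈ A
    · have e : f v = σ v := by simp [f, hvp, hvq, hvA]
      have n1 : σ v ≠ p := by
        rintro rfl
        rw [hi] at hpB'
        tauto
      have n2 : σ v ≠ q := by
        rintro rfl
        rw [hi] at hqB'
        tauto
      rw [e]
      have : σ v ∈ A ∨ v ∈ A := hvA.symm
      simp [f, n1, n2, hi, this]
    · have e : f v = v := by simp [f, hvp, hvq, hvA]
      rw [e, e]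
  refine ⟨hf.toPerm f, ?_, ?_, ?_⟩
  · intro v
    change f v = v ∨ (G.Adj v (f v) ∧ f (f v) = v)
    rw [hf v]
    by_cases hvp : v = p
    · subst hvp
      have : f v = q := by simp [f]
      rw [this]
      rcases hpq with h | h
      · exact Or.inl h.symm
      · exact Or.inr ⟨h, rfl⟩
    by_cases hvq : v = q
    · subst hvq
      have : f v = p := by simp [f, hvp]
      rw [this]
      rcases hpq with h | h
      · exact Or.inl h
      · exact Or.inr ⟨h.symm, rfl⟩
    by_cases hvA : v ∈ A ∨ σ v ∈ A
    · have e : f v = σ v := by simp [f, hvp, hvq, hvA]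
      rw [e]
      rcases h1 v with h | h
      · exact Or.inl h
      · exact Or.inr ⟨h.1, rfl⟩
    · left
      simp [f, hvp, hvq, hvA]
  · intro v hv
    have hvp : v ≠ p := by rintro rfl; exact hv hp
    have hvq : v ≠ q := by rintro rfl; exact hv hq
    change f v = v
    simp [f, hvp, hvq, h2 v hv]
  · rw [Finset.image_insert]
    have e1 : (hf.toPerm f) p = q := by
      change f p = q
      simp [f]
    rw [e1]
    congr 1
    apply Finset.image_congr
    intro v hv
    have hv' : v ∈ A := hv
    have hvp : v ≠ p := by rintro rfl; exact hpA hv'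
    have hvq : v ≠ q := by rintro rfl; exact hqA hv'
    change f v = σ v
    simp [f, hvp, hvq, hv']

lemma tr_geodesic {V : Type*} [DecidableEq V] {G : SimpleGraph V} (hG : G.IsTree)
    {U : Finset V} (hU : (G.induce (U : Set V)).Preconnected) {s t : V} (hs : s ∈ U)
    (ht : t ∈ U) :
    ∃ p : ℕ → V, p 0 = s ∧ (∀ i, G.dist s t ≤ i → p i = t) ∧ (∀ i, p i ∈ U) ∧
      (∀ i, p i = p (i + 1) ∨ G.Adj (p i) (p (i + 1))) ∧
      ∀ i, G.dist (p i) t ≤ G.dist s t - i := by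
  obtain ⟨w, hw⟩ := (hU ⟨s, hs⟩ ⟨t, ht⟩).exists_isPath
  let e := SimpleGraph.Embedding.induce (G := G) (U : Set V)
  let q : G.Walk s t := w.map e.toHom
  have hq : q.IsPath := SimpleGraph.Walk.map_isPath_of_injective e.injective hw
  obtain ⟨r, hr, hrl⟩ := hG.connected.exists_path_of_dist s t
  have hqr : q = r := congrArg Subtype.val (hG.isAcyclic.path_unique ⟨q, hq⟩ ⟨r, hr⟩)
  have hl : q.length = G.dist s t := by rw [hqr, hrl]
  refine ⟨q.getVert, by simp, fun i hi => q.getVert_of_length_le (by omega), ?_, ?_, ?_⟩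
  · intro i
    have : q.getVert i ∈ q.support := q.getVert_mem_support i
    have hsup : q.support = w.support.map e.toHom := SimpleGraph.Walk.support_map _ _
    rw [hsup, List.mem_map] at this
    obtain ⟨a, _, ha⟩ := this
    have h2 : (a : V) ∈ U := a.2
    change q.getVert i ∈ U
    rw [← ha]
    exact h2
  · intro i
    by_cases hi : i < q.length
    · exact Or.inr (q.adj_getVert_succ hi)
    · left
      rw [q.getVert_of_length_le (by omega), q.getVert_of_length_le (by omega)]
  · intro i
    have := SimpleGraph.dist_le (q.drop i)
    rw [SimpleGraph.Walk.drop_length] at this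
    omega

lemma tr_exists_remove {V : Type*} [DecidableEq V] {G : SimpleGraph V} 
    {U : Finset V} (hU : (G.induce (U : Set V)).Preconnected) (hne : U.Nonempty) :
    ∃ x ∈ U, (G.induce ((U.erase x : Finset V) : Set V)).Preconnected := by
  haveI : Nonempty (U : Set V) := hne.to_subtype
  have hc : (G.induce (U : Set V)).Connected := ⟨hU⟩
  haveI : Finite (U : Set V) := U.finite_toSet
  obtain ⟨x, hx⟩ := hc.exists_preconnected_induce_compl_singleton_of_finite
  refine ⟨x, x.2, ?_⟩
  intro a b
  have haU : (a : V) ∈ U ∧ (a : V) ≠ x := by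
    have := a.2; simp at this; tauto
  have hbU : (b : V) ∈ U ∧ (b : V) ≠ x := by
    have := b.2; simp at this; tauto
  let φ : ((G.induce (U : Set V)).induce {x}ᶜ) →g
      (G.induce ((U.erase x : Finset V) : Set V)) :=
    { toFun := fun y => ⟨y.1.1, by
        have h1 := y.2
        have h2 : (y.1 : V) ∈ U := y.1.2
        have h3 : (y.1 : V) ≠ x := fun h => h1 (Subtype.ext h)
        simp [h2, h3]⟩
      map_rel' := fun {y z} h => h }
  have := (hx ⟨⟨a, haU.1⟩, fun h => haU.2 (congrArg Subtype.val h)⟩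
    ⟨⟨b, hbU.1⟩, fun h => hbU.2 (congrArg Subtype.val h)⟩).map φ
  exact this

/-- The inductive step, when the removed vertex `t` is a target. -/
lemma tr_core {V : Type*} [DecidableEq V] {G : SimpleGraph V} (hG : G.IsTree)
    {U : Finset V} (hU : (G.induce (U : Set V)).Preconnected) {t : V} 
    (S T : Finset V) (hS : S ⊆ U) (hT : T ⊆ U) (hc : S.card = T.card) (ht : t ∈ T)
    (ih : ∀ S T : Finset V, S ⊆ U.erase t → T ⊆ U.erase t → S.card = T.card →
      ∀ ℓ, (∀ s ∈ S, ∀ t ∈ T, G.dist s t ≤ ℓ) → ∀ N, ℓ + 2 * (S.card - 1) ≤ N →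
      TRReach G (U.erase t) N S T)
    (ℓ : ℕ) (hl : ∀ s ∈ S, ∀ t ∈ T, G.dist s t ≤ ℓ) (N : ℕ)
    (hN : ℓ + 2 * (S.card - 1) ≤ N) : TRReach G U N S T := by
  have hTpos : 0 < T.card := Finset.card_pos.2 ⟨t, ht⟩
  have hSne : S.Nonempty := Finset.card_pos.1 (by omega)
  obtain ⟨s, hs, hmin⟩ := Finset.exists_min_image S (fun v => G.dist v t) hSne
  obtain ⟨p, hp0, hpt, hpU, hpa, hpd⟩ := tr_geodesic hG hU (hS hs) (hT ht)
  have hcS : (S.erase s).card = S.card - 1 := Finset.card_erase_of_mem hs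
  have hcT : (T.erase t).card = T.card - 1 := Finset.card_erase_of_mem ht
  have hS' : S.erase s ⊆ U.erase t := by
    intro a ha
    obtain ⟨has, haS⟩ := Finset.mem_erase.1 ha
    refine Finset.mem_erase.2 ⟨?_, hS haS⟩
    rintro rfl
    have := hmin a haS
    rw [SimpleGraph.dist_self] at this
    exact has ((hG.connected.dist_eq_zero_iff.1 (by omega : G.dist s a = 0)).symm)
  have hreach : TRReach G (U.erase t) (N - 2) (S.erase s) (T.erase t) := by
    by_cases hk : S.card = 1
    · have : S.erase s = ∅ := Finset.card_eq_zero.1 (by omega)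
      refine ih _ _ hS' (Finset.erase_subset_erase _ hT) (by omega) 0 ?_ _ (by omega)
      simp [this]
    · refine ih _ _ hS' (Finset.erase_subset_erase _ hT) (by omega) ℓ ?_ _ (by omega)
      exact fun a ha b hb => hl a (Finset.mem_of_mem_erase ha) b (Finset.mem_of_mem_erase hb)
  obtain ⟨A, hA0, hAN, hA⟩ := hreach
  have hAU : ∀ j, A j ⊆ U.erase t := by
    intro j
    induction j with
    | zero => rw [hA0]; exact hS'
    | succ j hj => exact (hA j).subset hj
  have hAd : ∀ j, ∀ a ∈ A j, G.dist s t - j ≤ G.dist a t := by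
    intro j
    induction j with
    | zero =>
      intro a ha
      rw [hA0] at ha
      have := hmin a (Finset.mem_of_mem_erase ha)
      simpa using this
    | succ j hj =>
      intro b hb
      obtain ⟨σ, h1, -, h3⟩ := hA j
      rw [← h3, Finset.mem_image] at hb
      obtain ⟨a, ha, rfl⟩ := hb
      have h4 := hj a ha
      rcases h1 a with h | h
      · rw [h]; omega
      · have h5 := hG.connected.dist_triangle (u := a) (v := σ a) (w := t)
        rw [SimpleGraph.dist_eq_one_iff_adj.2 h.1] at h5
        omega
  have key : ∀ m j, (j < m ∨ (m = 0 ∧ j = 0)) → p m ∉ A j := by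
    rintro m j (h | ⟨rfl, rfl⟩) hm
    · by_cases hd : G.dist s t ≤ m
      · rw [hpt m hd] at hm
        exact Finset.notMem_erase _ _ (hAU j hm)
      · have h1 := hAd j _ hm
        have h2 := hpd m
        omega
    · rw [hp0, hA0] at hm
      exact Finset.notMem_erase _ _ hm
  refine ⟨fun i => insert (p i) (A (i - 2)), ?_, ?_, ?_⟩
  · simp only [hp0, Nat.zero_sub, hA0]
    exact Finset.insert_erase hs
  · have := hl s hs t ht
    simp only [hAN, hpt N (by omega)]
    exact Finset.insert_erase ht
  · intro i
    have hst : TRStep G U (A (i - 2)) (A (i + 1 - 2)) := by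
      by_cases hi : i < 2
      · rw [show i - 2 = 0 by omega, show i + 1 - 2 = 0 by omega]
        exact TRStep.refl _ _ _
      · have := (hA (i - 2)).mono (Finset.erase_subset t U)
        rwa [show i - 2 + 1 = i + 1 - 2 by omega] at this
    exact hst.insert (hpa i) (hpU i) (hpU _) (key _ _ (by omega)) (key _ _ (by omega))
      (key _ _ (by omega)) (key _ _ (by omega))

lemma tr_main {V : Type*} [DecidableEq V] {G : SimpleGraph V} (hG : G.IsTree) (U : Finset V) :
    (G.induce (U : Set V)).Preconnected → ∀ S T : Finset V, S ⊆ U → T ⊆ U → S.card = T.card →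
      ∀ ℓ, (∀ s ∈ S, ∀ t ∈ T, G.dist s t ≤ ℓ) → ∀ N, ℓ + 2 * (S.card - 1) ≤ N →
      TRReach G U N S T := by
  induction U using Finset.strongInduction with
  | H U ih =>
  intro hU S T hS hT hc ℓ hl N hN
  by_cases hne : U.Nonempty
  · obtain ⟨x, hx, hxU⟩ := tr_exists_remove hU hne
    have ih' := ih _ (Finset.erase_ssubset hx) hxU
    by_cases hxT : x ∈ T
    · exact tr_core hG hU S T hS hT hc hxT ih' ℓ hl N hN
    by_cases hxS : x ∈ S
    · refine (tr_core hG hU T S hT hS hc.symm hxS ih' ℓ ?_ N (by omega)).symm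
      intro a ha b hb
      rw [SimpleGraph.dist_comm]
      exact hl b hb a ha
    · obtain ⟨A, h0, h1, h2⟩ := ih' S T (Finset.subset_erase.2 ⟨hS, hxS⟩)
        (Finset.subset_erase.2 ⟨hT, hxT⟩) hc ℓ hl N hN
      exact ⟨A, h0, h1, fun i => (h2 i).mono (Finset.erase_subset _ _)⟩
  · rw [Finset.not_nonempty_iff_eq_empty] at hne
    subst hne
    rw [Finset.subset_empty] at hS hT
    subst hS hT
    exact ⟨fun _ => ∅, rfl, rfl, fun _ => TRStep.refl _ _ _⟩

/-- Routing in trees: in a finite tree `G`, given vertex subsets `S`, `T` of equal size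
`k`, with `ℓ` the maximal distance between a vertex of `S` and a vertex of `T`, there is a
strategy of `ℓ + 2(k − 1)` rounds of matchings after which the agents that started on `S`
occupy exactly the vertices of `T`. -/
theorem tree_routing {V : Type*} [Fintype V] [DecidableEq V] (G : SimpleGraph V)
    (hG : G.IsTree) (S T : Finset V) (k : ℕ) (hS : S.card = k) (hT : T.card = k)
    (ℓ : ℕ) (hℓ : ℓ = (S ×ˢ T).sup fun x => G.dist x.1 x.2) :
    ∃ σ : ℕ → Equiv.Perm V,
      (∀ i < ℓ + 2 * (k - 1), IsMatchingSwap G (σ i)) ∧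
      S.image (positions σ (ℓ + 2 * (k - 1))) = T := by
  have hpre : (G.induce ((Finset.univ : Finset V) : Set V)).Preconnected := by
    intro a b
    obtain ⟨w⟩ := hG.connected a.1 b.1
    let φ : G →g G.induce ((Finset.univ : Finset V) : Set V) :=
      { toFun := fun v => ⟨v, by simp⟩
        map_rel' := fun {y z} h => h }
    exact (SimpleGraph.Walk.reachable w).map φ
  obtain ⟨A, h0, h1, h2⟩ := tr_main hG Finset.univ hpre S T (Finset.subset_univ _)
    (Finset.subset_univ _) (hS.trans hT.symm) ℓ
    (fun s hs t ht => by
      rw [hℓ]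
      exact Finset.le_sup (f := fun x : V × V => G.dist x.1 x.2)
        (Finset.mk_mem_product hs ht))
    (ℓ + 2 * (k - 1)) (by rw [hS])
  choose σ hσ1 hσ2 hσ3 using h2
  refine ⟨σ, fun i _ => hσ1 i, ?_⟩
  have : ∀ i, S.image (positions σ i) = A i := by
    intro i
    induction i with
    | zero => rw [h0]; simp [positions]
    | succ i hi => rw [← hσ3 i, ← hi, Finset.image_image]; rfl
  rw [this, h1]
end

section
/- There exists a constant C > 0 such that for every caterpillar T on n vertices (n ≥ 1), the acquaintance time satisfies AC(T) ≤ C · n. -/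
open scoped Classical

/-- A caterpillar: a tree in which every vertex is on, or adjacent to, a single path
(the spine). -/
def IsCaterpillar {V : Type*} (G : SimpleGraph V) : Prop :=
  G.IsTree ∧ ∃ (u v : V) (P : G.Walk u v), P.IsPath ∧
    ∀ w : V, w ∈ P.support ∨ ∃ x ∈ P.support, G.Adj w x


section Helpers

variable {V : Type}

/-- Concatenate two strategies: `σ` for `t` rounds, then `τ`. -/
def concatStrat (σ : ℕ → Equiv.Perm V) (t : ℕ) (τ : ℕ → Equiv.Perm V) : ℕ → Equiv.Perm V :=
  fun i => if i < t then σ i else τ (i - t)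

lemma concat_swap {G : SimpleGraph V} {σ τ : ℕ → Equiv.Perm V} (t : ℕ)
    (hσ : ∀ i, IsMatchingSwap G (σ i)) (hτ : ∀ i, IsMatchingSwap G (τ i)) :
    ∀ i, IsMatchingSwap G (concatStrat σ t τ i) := by
  intro i
  unfold concatStrat
  split_ifs
  · exact hσ i
  · exact hτ _

lemma concat_pos_left (σ τ : ℕ → Equiv.Perm V) (t i : ℕ) (h : i ≤ t) :
    positions (concatStrat σ t τ) i = positions σ i := by
  induction i with
  | zero => rfl
  | succ i ih =>
    have h' : i < t := h
    simp only [positions]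
    rw [ih h'.le]
    simp [concatStrat, h']

lemma concat_pos_right (σ τ : ℕ → Equiv.Perm V) (t j : ℕ) (a : V) :
    positions (concatStrat σ t τ) (t + j) a = positions τ j (positions σ t a) := by
  induction j with
  | zero => simp [concat_pos_left, positions]
  | succ j ih =>
    rw [← add_assoc]
    simp only [positions, Function.comp]
    rw [ih]
    simp [concatStrat]

lemma positions_inj (σ : ℕ → Equiv.Perm V) (i : ℕ) : Function.Injective (positions σ i) := by
  induction i with
  | zero => exact Function.injective_id
  | succ i ih => exact (σ i).injective.comp ih

lemma concat_acq_left {G : SimpleGraph V} {σ τ : ℕ → Equiv.Perm V} {t s : ℕ} {a b : V}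
    (h : Acquainted G σ t a b) : Acquainted G (concatStrat σ t τ) (t + s) a b := by
  obtain ⟨i, hi, hadj⟩ := h
  refine ⟨i, by omega, ?_⟩
  rwa [concat_pos_left _ _ _ _ hi]

lemma concat_acq_right {G : SimpleGraph V} {σ τ : ℕ → Equiv.Perm V} {t s : ℕ} {a b : V}
    (h : Acquainted G τ s (positions σ t a) (positions σ t b)) :
    Acquainted G (concatStrat σ t τ) (t + s) a b := by
  obtain ⟨i, hi, hadj⟩ := h
  refine ⟨t + i, by omega, ?_⟩
  rwa [concat_pos_right, concat_pos_right]

/-- Odd-even transposition on `{0,…,m-1}` at time `t`. -/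
def beltSw (m t i : ℕ) : ℕ :=
  if i % 2 = t % 2 then (if i + 1 < m then i + 1 else i) else (i - 1)

/-- Initial phase of a slot. -/
def beltC (m i : ℕ) : ℕ := if i % 2 = 0 then i else 2 * m - 1 - i

/-- Triangular wave. -/
def beltTri (m x : ℕ) : ℕ :=
  if x < m then x else if x < 2 * m then 2 * m - 1 - x else
    if x < 3 * m then x - 2 * m else 4 * m - 1 - x

lemma beltSw_lt {m t i : ℕ} (h : i < m) : beltSw m t i < m := by
  unfold beltSw; split_ifs <;> omega

lemma beltSw_invol {m t i : ℕ} (h : i < m) : beltSw m t (beltSw m t i) = i := by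
  unfold beltSw; split_ifs <;> omega

lemma beltSw_cases {m t i : ℕ} (h : i < m) :
    beltSw m t i = i ∨ (beltSw m t i = i + 1) ∨ (beltSw m t i + 1 = i) := by
  unfold beltSw; split_ifs <;> omega

lemma beltTri_lt {m x : ℕ} (h : x < 4 * m) : beltTri m x < m := by
  unfold beltTri; split_ifs <;> omega

lemma beltC_lt {m i : ℕ} (h : i < m) : beltC m i + 1 < 2 * m ∧ beltC m i % 2 = 0 := by
  unfold beltC; split_ifs <;> omega

lemma beltC_inj {m i j : ℕ} (hi : i < m) (hj : j < m) (h : beltC m i = beltC m j) : i = j := by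
  unfold beltC at h; split_ifs at h <;> omega

lemma beltTri_C {m i : ℕ} (h : i < m) : beltTri m (beltC m i) = i := by
  unfold beltC beltTri; split_ifs <;> omega

lemma beltSw_tri {m t x : ℕ} (h : x + 1 < 4 * m) (hx : x % 2 = t % 2) :
    beltSw m t (beltTri m x) = beltTri m (x + 1) := by
  unfold beltSw beltTri; split_ifs <;> omega

lemma belt_visit {m i q : ℕ} (hi : i < m) (hq : q < m) :
    ∃ t < 2 * m, beltTri m (beltC m i + t) = q := by
  have := beltC_lt hi
  by_cases h : beltC m i ≤ q
  · refine ⟨q - beltC m i, by omega, ?_⟩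
    unfold beltTri; split_ifs <;> omega
  · refine ⟨2 * m + q - beltC m i, by omega, ?_⟩
    unfold beltTri; split_ifs <;> omega

lemma belt_meet {m i j : ℕ} (hi : i < m) (hj : j < m) (hij : i ≠ j) :
    ∃ t < 2 * m, beltTri m (beltC m i + t) + 1 = beltTri m (beltC m j + t) ∨
      beltTri m (beltC m j + t) + 1 = beltTri m (beltC m i + t) := by
  have h1 := beltC_lt hi
  have h2 := beltC_lt hj
  have h3 : beltC m i ≠ beltC m j := fun h => hij (beltC_inj hi hj h)
  refine ⟨2 * m - 1 - (beltC m i + beltC m j) / 2, by omega, ?_⟩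
  generalize beltC m i = c at *
  generalize beltC m j = d at *
  obtain ⟨c', rfl⟩ : ∃ c', c = 2 * c' := ⟨c / 2, by omega⟩
  obtain ⟨d', rfl⟩ : ∃ d', d = 2 * d' := ⟨d / 2, by omega⟩
  have h4 : (2 * c' + 2 * d') / 2 = c' + d' := by omega
  rw [h4]
  unfold beltTri; split_ifs <;> omega

/-- A spine: an injective path `p 0, …, p (m-1)` dominating the graph. -/
structure Spine (G : SimpleGraph V) (m : ℕ) (p : ℕ → V) : Prop where
  inj : ∀ i j, i < m → j < m → p i = p j → i = j
  adj : ∀ i, i + 1 < m → G.Adj (p i) (p (i + 1))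
  dom : ∀ w, (∃ i < m, p i = w) ∨ ∃ i < m, G.Adj w (p i)

/-- The belt move, as a function on vertices. -/
noncomputable def beltFun (m : ℕ) (p : ℕ → V) (t : ℕ) (v : V) : V :=
  if h : ∃ i < m, p i = v then p (beltSw m t h.choose) else v

lemma beltFun_spine {G : SimpleGraph V} {m : ℕ} {p : ℕ → V} (hS : Spine G m p) (t i : ℕ)
    (hi : i < m) : beltFun m p t (p i) = p (beltSw m t i) := by
  have h : ∃ j < m, p j = p i := ⟨i, hi, rfl⟩
  unfold beltFun
  rw [dif_pos h]
  have := hS.inj _ _ h.choose_spec.1 hi h.choose_spec.2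
  rw [this]

lemma beltFun_leaf {m : ℕ} {p : ℕ → V} (t : ℕ) {v : V}
    (hv : ¬ ∃ i < m, p i = v) : beltFun m p t v = v := by
  unfold beltFun
  rw [dif_neg hv]

lemma beltFun_invol {G : SimpleGraph V} {m : ℕ} {p : ℕ → V} (hS : Spine G m p) (t : ℕ) :
    Function.Involutive (beltFun m p t) := by
  intro v
  by_cases h : ∃ i < m, p i = v
  · obtain ⟨i, hi, rfl⟩ := h
    rw [beltFun_spine hS t i hi, beltFun_spine hS t _ (beltSw_lt hi), beltSw_invol hi]
  · rw [beltFun_leaf t h, beltFun_leaf t h]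

lemma exists_belt {G : SimpleGraph V} {m : ℕ} {p : ℕ → V} (hS : Spine G m p) :
    ∃ b : ℕ → Equiv.Perm V, (∀ t, IsMatchingSwap G (b t)) ∧
      (∀ t i, i < m → b t (p i) = p (beltSw m t i)) ∧
      (∀ t v, (¬ ∃ i < m, p i = v) → b t v = v) := by
  refine ⟨fun t => (beltFun_invol hS t).toPerm, ?_, ?_, ?_⟩
  · intro t v
    simp only [Function.Involutive.coe_toPerm]
    by_cases h : ∃ i < m, p i = v
    · obtain ⟨i, hi, rfl⟩ := h
      have h2 := beltFun_invol hS t (p i)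
      rw [beltFun_spine hS t i hi] at h2 ⊢
      have hlt := beltSw_lt (t := t) hi
      rcases beltSw_cases (t := t) hi with h | h | h
      · left; rw [h]
      · right
        refine ⟨?_, h2⟩
        rw [h] at hlt ⊢
        exact hS.adj i hlt
      · right
        refine ⟨?_, h2⟩
        have := hS.adj (beltSw m t i) (by omega)
        rw [h] at this
        exact this.symm
    · left; exact beltFun_leaf t h
  · intro t i hi
    exact beltFun_spine hS t i hi
  · intro t v hv
    exact beltFun_leaf t hv

lemma belt_pos {m : ℕ} {p : ℕ → V} {b : ℕ → Equiv.Perm V}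
    (hb : ∀ t i, i < m → b t (p i) = p (beltSw m t i)) (i : ℕ) (hi : i < m) (t : ℕ)
    (ht : t ≤ 2 * m) : positions b t (p i) = p (beltTri m (beltC m i + t)) := by
  have hc := beltC_lt hi
  induction t with
  | zero => simp [positions, beltTri_C hi]
  | succ t ih =>
    simp only [positions, Function.comp]
    rw [ih (by omega), hb _ _ (beltTri_lt (by omega)), beltSw_tri (by omega) (by omega), add_assoc]

lemma belt_pos_leaf {m : ℕ} {p : ℕ → V} {b : ℕ → Equiv.Perm V}
    (hb : ∀ t v, (¬ ∃ i < m, p i = v) → b t v = v) (v : V) (hv : ¬ ∃ i < m, p i = v) (t : ℕ) :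
    positions b t v = v := by
  induction t with
  | zero => rfl
  | succ t ih =>
    simp only [positions, Function.comp]
    rw [ih, hb _ _ hv]

lemma belt_acq {G : SimpleGraph V} {m : ℕ} {p : ℕ → V} (hS : Spine G m p) :
    ∃ b : ℕ → Equiv.Perm V, (∀ t, IsMatchingSwap G (b t)) ∧
      ∀ i < m, ∀ w, w ≠ p i → Acquainted G b (2 * m) (p i) w := by
  obtain ⟨b, hsw, hsp, hlf⟩ := exists_belt hS
  refine ⟨b, hsw, ?_⟩
  intro i hi w hw
  by_cases h : ∃ j < m, p j = w
  · obtain ⟨j, hj, rfl⟩ := h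
    have hij : i ≠ j := by rintro rfl; exact hw rfl
    obtain ⟨t, ht, hm⟩ := belt_meet hi hj hij
    refine ⟨t, ht.le, ?_⟩
    rw [belt_pos hsp i hi t ht.le, belt_pos hsp j hj t ht.le]
    have hci := beltC_lt hi
    have hcj := beltC_lt hj
    have h1 : beltTri m (beltC m i + t) < m := beltTri_lt (by omega)
    have h2 : beltTri m (beltC m j + t) < m := beltTri_lt (by omega)
    rcases hm with hm | hm
    · rw [← hm] at h2 ⊢
      exact hS.adj _ h2
    · rw [← hm] at h1 ⊢
      exact (hS.adj _ h1).symm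
  · rcases hS.dom w with h' | ⟨q, hq, hadj⟩
    · exact absurd h' h
    · obtain ⟨t, ht, hv⟩ := belt_visit hi hq
      refine ⟨t, ht.le, ?_⟩
      rw [belt_pos hsp i hi t ht.le, belt_pos_leaf hlf w h t, hv]
      exact hadj.symm

/-- The greedy leaf swap. -/
lemma leaf_swap {G : SimpleGraph V} (isS : V → Prop) (att : V → V)
    (hatt : ∀ w, ¬ isS w → isS (att w) ∧ G.Adj w (att w)) (O : Set V) :
    ∃ l : Equiv.Perm V, IsMatchingSwap G l ∧
      (∀ w, ¬ isS w → w ∈ l '' O → w ∈ O ∧ att w ∈ l '' O) ∧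
      (∀ v, isS v → v ∈ O → v ∈ l '' O) := by
  let Q : V → V → Prop := fun v w => v ∉ O ∧ w ∈ O ∧ ¬ isS w ∧ att w = v
  let c : V → V := fun v => if h : ∃ w, Q v w then h.choose else v
  have hc : ∀ v, (∃ w, Q v w) → Q v (c v) := by
    intro v h
    simp only [c, dif_pos h]
    exact h.choose_spec
  have hc' : ∀ v, (¬ ∃ w, Q v w) → c v = v := by
    intro v h
    simp only [c, dif_neg h]
  let f : V → V := fun v => if isS v then c v else
    if Q (att v) v ∧ c (att v) = v then att v else v
  have f1 : ∀ v, isS v → f v = c v := fun v h => by simp only [f, if_pos h]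
  have f2 : ∀ v, ¬ isS v → Q (att v) v ∧ c (att v) = v → f v = att v := fun v h h' => by
    simp only [f, if_neg h, if_pos h']
  have f3 : ∀ v, ¬ isS v → ¬ (Q (att v) v ∧ c (att v) = v) → f v = v := fun v h h' => by
    simp only [f, if_neg h, if_neg h']
  have hf : Function.Involutive f := by
    intro v
    by_cases hv : isS v
    · rw [f1 v hv]
      by_cases h : ∃ w, Q v w
      · have hq := hc v h
        have e : att (c v) = v := hq.2.2.2
        rw [f2 (c v) hq.2.2.1 ⟨by rw [e]; exact hq, by rw [e]⟩, e]
      · rw [hc' v h, f1 v hv, hc' v h]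
    · by_cases h : Q (att v) v ∧ c (att v) = v
      · rw [f2 v hv h, f1 _ (hatt v hv).1, h.2]
      · rw [f3 v hv h, f3 v hv h]
  have himg : ∀ v, v ∈ hf.toPerm '' O ↔ f v ∈ O := by
    intro v
    constructor
    · rintro ⟨x, hx, rfl⟩
      simpa [hf x] using hx
    · intro h
      exact ⟨f v, h, by simp [hf v]⟩
  refine ⟨hf.toPerm, ?_, ?_, ?_⟩
  · intro v
    simp only [Function.Involutive.coe_toPerm]
    by_cases hv : isS v
    · by_cases h : ∃ w, Q v w
      · right
        refine ⟨?_, hf v⟩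
        rw [f1 v hv]
        have hq := hc v h
        have := (hatt _ hq.2.2.1).2
        rw [hq.2.2.2] at this
        exact this.symm
      · left; rw [f1 v hv, hc' v h]
    · by_cases h : Q (att v) v ∧ c (att v) = v
      · right
        refine ⟨?_, hf v⟩
        rw [f2 v hv h]
        exact (hatt v hv).2
      · left; exact f3 v hv h
  · intro w hw hwO
    rw [himg] at hwO ⊢
    by_cases h : Q (att w) w ∧ c (att w) = w
    · rw [f2 w hw h] at hwO
      exact absurd hwO h.1.1
    · rw [f3 w hw h] at hwO
      refine ⟨hwO, ?_⟩
      rw [f1 _ (hatt w hw).1]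
      by_cases hO : att w ∈ O
      · rw [hc' _ (fun ⟨x, hx⟩ => hx.1 hO)]
        exact hO
      · exact (hc (att w) ⟨w, hO, hwO, hw, rfl⟩).2.1
  · intro v hv hO
    rw [himg, f1 v hv, hc' _ (fun ⟨x, hx⟩ => hx.1 hO)]
    exact hO

lemma load_inv {G : SimpleGraph V} {m : ℕ} {p : ℕ → V} {b : ℕ → Equiv.Perm V}
    (hsw : ∀ t, IsMatchingSwap G (b t))
    (hsp : ∀ t i, i < m → b t (p i) = p (beltSw m t i))
    (hlf : ∀ t v, (¬ ∃ i < m, p i = v) → b t v = v)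
    (att : V → V)
    (hatt : ∀ w, (¬ ∃ i < m, p i = w) → (∃ i < m, p i = att w) ∧ G.Adj w (att w))
    (S : Set V) (t : ℕ) (ht : t ≤ 2 * m) :
    ∃ τ : ℕ → Equiv.Perm V, (∀ i, IsMatchingSwap G (τ i)) ∧
      ∀ w, (¬ ∃ i < m, p i = w) → w ∈ positions τ (2 * t) '' S →
        ∀ i < m, (∃ t' < t, positions b t' (p i) = att w) →
          positions b t (p i) ∈ positions τ (2 * t) '' S := by
  induction t with
  | zero =>
    refine ⟨fun _ => 1, fun i v => Or.inl rfl, ?_⟩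
    rintro w _ _ i _ ⟨t', h, _⟩
    omega
  | succ t ih =>
    obtain ⟨τ, hτ, hinv⟩ := ih (by omega)
    obtain ⟨l, hl, hl1, hl2⟩ := leaf_swap (fun v => ∃ i < m, p i = v) att hatt
      (positions τ (2 * t) '' S)
    refine ⟨concatStrat τ (2 * t) (fun i => if i = 0 then l else b t),
      concat_swap _ hτ ?_, ?_⟩
    · intro i
      by_cases h : i = 0
      · simpa [h] using hl
      · simpa [h] using hsw t
    · have himg : positions (concatStrat τ (2 * t) (fun i => if i = 0 then l else b t))
          (2 * (t + 1)) '' S = b t '' (l '' (positions τ (2 * t) '' S)) := by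
        rw [Set.image_image, Set.image_image]
        apply Set.image_congr
        intro a _
        rw [show 2 * (t + 1) = 2 * t + 2 by ring, concat_pos_right]
        simp [positions]
      rw [himg]
      intro w hw hwO i hi hvis
      have hwO' : w ∈ l '' (positions τ (2 * t) '' S) := by
        obtain ⟨x, hx, hxw⟩ := hwO
        have : b t x = b t w := by rw [hxw, hlf t w hw]
        rwa [← (b t).injective this]
      obtain ⟨h1, h2⟩ := hl1 w hw hwO'
      refine ⟨positions b t (p i), ?_, rfl⟩
      obtain ⟨t', ht', hv⟩ := hvis
      rcases Nat.lt_succ_iff_lt_or_eq.mp ht' with h | h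
      · have hc := beltC_lt hi
        refine hl2 _ ?_ (hinv w hw h1 i hi ⟨t', h, hv⟩)
        exact ⟨_, beltTri_lt (by omega), (belt_pos hsp i hi t (by omega)).symm⟩
      · subst h
        rwa [hv]

lemma load {G : SimpleGraph V} {m : ℕ} {p : ℕ → V} (hS : Spine G m p)
    (S : Finset V) (hcard : S.card ≤ m) :
    ∃ τ : ℕ → Equiv.Perm V, (∀ i, IsMatchingSwap G (τ i)) ∧
      ∀ a ∈ S, ∃ i < m, p i = positions τ (4 * m) a := by
  obtain ⟨b, hsw, hsp, hlf⟩ := exists_belt hS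
  have hex : ∀ w, ∃ x, (¬ ∃ i < m, p i = w) → (∃ i < m, p i = x) ∧ G.Adj w x := by
    intro w
    rcases hS.dom w with h | ⟨i, hi, h⟩
    · exact ⟨w, fun h' => absurd h h'⟩
    · exact ⟨p i, fun _ => ⟨⟨i, hi, rfl⟩, h⟩⟩
  choose att hatt using hex
  obtain ⟨τ, hτ, hinv⟩ := load_inv hsw hsp hlf att hatt (S : Set V) (2 * m) le_rfl
  rw [show 2 * (2 * m) = 4 * m by ring] at hinv
  refine ⟨τ, hτ, ?_⟩
  intro a ha
  by_contra hw
  have hsub : insert (positions τ (4 * m) a)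
      ((Finset.range m).image (fun i => positions b (2 * m) (p i))) ⊆
      S.image (positions τ (4 * m)) := by
    intro x hx
    rw [Finset.mem_insert] at hx
    rcases hx with rfl | hx
    · exact Finset.mem_image_of_mem _ ha
    · obtain ⟨i, hi, rfl⟩ := Finset.mem_image.mp hx
      rw [Finset.mem_range] at hi
      obtain ⟨⟨q, hq, hqa⟩, -⟩ := hatt _ hw
      obtain ⟨t, ht, hv⟩ := belt_visit hi hq
      have := hinv _ hw ⟨a, ha, rfl⟩ i hi ⟨t, ht, by
        rw [belt_pos hsp i hi t ht.le, hv, hqa]⟩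
      obtain ⟨y, hy, hyx⟩ := this
      exact Finset.mem_image.mpr ⟨y, hy, hyx⟩
  have h1 := Finset.card_le_card hsub
  rw [Finset.card_insert_of_notMem, Finset.card_image_of_injOn, Finset.card_range] at h1
  · have := Finset.card_image_le (s := S) (f := positions τ (4 * m))
    omega
  · intro i hi j hj hij
    have hi' : i < m := by simpa using hi
    have hj' : j < m := by simpa using hj
    exact hS.inj _ _ hi' hj' (positions_inj b _ hij)
  · intro hx
    obtain ⟨i, hi, hxx⟩ := Finset.mem_image.mp hx
    rw [Finset.mem_range] at hi
    have hc := beltC_lt hi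
    rw [belt_pos hsp i hi _ le_rfl] at hxx
    exact hw ⟨_, beltTri_lt (by omega), hxx⟩

lemma phase {G : SimpleGraph V} {m : ℕ} {p : ℕ → V} (hS : Spine G m p)
    (S : Finset V) (hcard : S.card ≤ m) :
    ∃ τ : ℕ → Equiv.Perm V, (∀ i, IsMatchingSwap G (τ i)) ∧
      ∀ a ∈ S, ∀ w, w ≠ a → Acquainted G τ (6 * m) a w := by
  obtain ⟨τ, hτ, hl⟩ := load hS S hcard
  obtain ⟨b, hb, hacq⟩ := belt_acq hS
  refine ⟨concatStrat τ (4 * m) b, concat_swap _ hτ hb, ?_⟩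
  intro a ha w hw
  rw [show 6 * m = 4 * m + 2 * m by ring]
  apply concat_acq_right
  obtain ⟨i, hi, he⟩ := hl a ha
  rw [← he]
  apply hacq i hi
  rw [he]
  exact fun h => hw (positions_inj _ _ h)

lemma phases {G : SimpleGraph V} {m : ℕ} {p : ℕ → V} (hS : Spine G m p) (k : ℕ) :
    ∀ S : Finset V, S.card ≤ k * m →
    ∃ τ : ℕ → Equiv.Perm V, (∀ i, IsMatchingSwap G (τ i)) ∧
      ∀ a ∈ S, ∀ w, w ≠ a → Acquainted G τ (k * (6 * m)) a w := by
  induction k with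
  | zero =>
    intro S hc
    have : S = ∅ := by simpa using hc
    subst this
    exact ⟨fun _ => 1, fun i v => Or.inl rfl, by simp⟩
  | succ k ih =>
    intro S hc
    obtain ⟨S1, hsub, hS1⟩ := Finset.exists_subset_card_eq (min_le_left S.card (k * m))
    obtain ⟨σ, hσ, h1⟩ := ih S1 (by rw [hS1]; exact min_le_right _ _)
    have hc2 : (S \ S1).card ≤ m := by
      rw [Finset.card_sdiff_of_subset hsub, hS1]
      rw [Nat.succ_mul] at hc
      omega
    obtain ⟨τ, hτ, h2⟩ := phase hS ((S \ S1).image (positions σ (k * (6 * m))))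
      (Finset.card_image_le.trans hc2)
    refine ⟨concatStrat σ (k * (6 * m)) τ, concat_swap _ hσ hτ, ?_⟩
    intro a ha w hw
    rw [Nat.succ_mul k]
    by_cases haS : a ∈ S1
    · exact concat_acq_left (h1 a haS w hw)
    · apply concat_acq_right
      apply h2
      · exact Finset.mem_image_of_mem _ (Finset.mem_sdiff.mpr ⟨ha, haS⟩)
      · exact fun h => hw (positions_inj _ _ h)

lemma AC_of_spine [Fintype V] {G : SimpleGraph V} {m : ℕ} {p : ℕ → V} (hS : Spine G m p)
    (hm : 1 ≤ m) : AC G ≤ 12 * Fintype.card V := by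
  have hmn : m ≤ Fintype.card V := by
    have : ((Finset.range m).image p).card = m := by
      rw [Finset.card_image_of_injOn, Finset.card_range]
      intro i hi j hj hij
      exact hS.inj _ _ (by simpa using hi) (by simpa using hj) hij
    rw [← this]
    exact Finset.card_le_univ _
  have hdm := Nat.div_add_mod (Fintype.card V) m
  have hml := Nat.mod_lt (Fintype.card V) hm
  obtain ⟨τ, hτ, h⟩ := phases hS (Fintype.card V / m + 1) Finset.univ (by
    rw [Finset.card_univ, Nat.succ_mul, Nat.mul_comm]; omega)
  have h1 : AC G ≤ (Fintype.card V / m + 1) * (6 * m) :=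
    Nat.sInf_le ⟨τ, fun i _ => hτ i, fun a b hab => h a (Finset.mem_univ _) b hab.symm⟩
  refine h1.trans ?_
  have : (Fintype.card V / m + 1) * (6 * m) = 6 * (m * (Fintype.card V / m)) + 6 * m := by ring
  rw [this]
  omega

end Helpers

/-- There is a constant `C > 0` such that every caterpillar on `n ≥ 1` vertices has
acquaintance time at most `C · n`. -/
theorem AC_caterpillar_linear :
    ∃ C : ℝ, 0 < C ∧ ∀ (V : Type) [Fintype V] (G : SimpleGraph V),
      IsCaterpillar G → 1 ≤ Fintype.card V → (AC G : ℝ) ≤ C * (Fintype.card V : ℝ) := by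
  refine ⟨12, by norm_num, ?_⟩
  intro V _ G hG _
  obtain ⟨-, u, v, P, hP, hdom⟩ := hG
  have hS : Spine G (P.length + 1) P.getVert := by
    refine ⟨?_, ?_, ?_⟩
    · intro i j hi hj h
      exact hP.getVert_injOn (by simp; omega) (by simp; omega) h
    · intro i hi
      exact P.adj_getVert_succ (by omega)
    · intro w
      rcases hdom w with h | ⟨x, hx, h⟩
      · left
        obtain ⟨i, hi, hl⟩ := SimpleGraph.Walk.mem_support_iff_exists_getVert.mp h
        exact ⟨i, by omega, hi⟩
      · right
        obtain ⟨i, rfl, hl⟩ := SimpleGraph.Walk.mem_support_iff_exists_getVert.mp hx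
        exact ⟨i, by omega, h⟩
  have := AC_of_spine hS (by omega)
  exact_mod_cast this
end

section
/- If T is a tree on n vertices (n ≥ 1), then T contains a subgraph that is a caterpillar on at least log₂ n vertices. -/
open scoped Classical

/-- The "descendants" of `v` with respect to the root `r`. -/
noncomputable def descFin {V : Type*} [Fintype V] (G : SimpleGraph V) (r v : V) : Finset V :=
  Finset.univ.filter fun w => G.dist r w = G.dist r v + G.dist v w

lemma exists_spine {V : Type*} [Fintype V] (G : SimpleGraph V) (hG : G.Connected) (r : V) :
    ∀ (n : ℕ) (v : V), (descFin G r v).card ≤ n →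
      ∃ (u : V) (P : G.Walk v u) (S : Finset V), P.IsPath ∧
        (∀ x ∈ P.support, x ∈ S) ∧
        (∀ x ∈ S, x ∈ P.support ∨ ∃ y ∈ P.support, G.Adj x y) ∧
        (∀ x ∈ S, x = v ∨ G.dist r v < G.dist r x) ∧
        (descFin G r v).card + 1 ≤ 2 ^ S.card := by
  intro n
  induction n with
  | zero =>
    intro v hv
    have : v ∈ descFin G r v := by simp [descFin]
    have := Finset.card_pos.mpr ⟨v, this⟩
    omega
  | succ n ih =>
    intro v hv
    set C : Finset V := Finset.univ.filter fun c => G.Adj v c ∧ G.dist r c = G.dist r v + 1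
      with hC
    have hcover : descFin G r v ⊆ insert v (C.biUnion fun c => descFin G r c) := by
      intro w hw
      rw [Finset.mem_insert, Finset.mem_biUnion]
      by_cases hwv : w = v
      · exact Or.inl hwv
      right
      simp only [descFin, Finset.mem_filter, Finset.mem_univ, true_and] at hw
      obtain ⟨p, hp⟩ := hG.exists_walk_length_eq_dist v w
      cases p with
      | nil => exact absurd rfl hwv
      | @cons _ c _ h q =>
        simp only [SimpleGraph.Walk.length_cons] at hp
        have h1 : G.dist c w ≤ q.length := SimpleGraph.dist_le q
        have h2 : G.dist v c = 1 := SimpleGraph.dist_eq_one_iff_adj.mpr h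
        have h3 : G.dist r c ≤ G.dist r v + G.dist v c := hG.dist_triangle
        have h4 : G.dist r w ≤ G.dist r c + G.dist c w := hG.dist_triangle
        refine ⟨c, ?_, ?_⟩
        · simp only [hC, Finset.mem_filter, Finset.mem_univ, true_and]
          exact ⟨h, by omega⟩
        · simp only [descFin, Finset.mem_filter, Finset.mem_univ, true_and]
          omega
    have hcard : (descFin G r v).card ≤ (C.biUnion fun c => descFin G r c).card + 1 :=
      (Finset.card_le_card hcover).trans (Finset.card_insert_le _ _)
    by_cases hne : C.Nonempty
    · obtain ⟨c, hcC, hmax⟩ := Finset.exists_max_image C (fun c => (descFin G r c).card) hne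
      have hbi : (C.biUnion fun c => descFin G r c).card ≤ C.card * (descFin G r c).card :=
        Finset.card_biUnion_le_card_mul _ _ _ hmax
      obtain ⟨hvc, hdc⟩ : G.Adj v c ∧ G.dist r c = G.dist r v + 1 := by
        simpa [hC] using hcC
      have hlt : (descFin G r c).card < (descFin G r v).card := by
        apply Finset.card_lt_card
        rw [Finset.ssubset_iff_of_subset]
        · refine ⟨v, by simp [descFin], ?_⟩
          simp only [descFin, Finset.mem_filter, Finset.mem_univ, true_and]
          omega
        · intro w hw
          simp only [descFin, Finset.mem_filter, Finset.mem_univ, true_and] at hw ⊢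
          have h2 : G.dist v c = 1 := SimpleGraph.dist_eq_one_iff_adj.mpr hvc
          have h3 : G.dist v w ≤ G.dist v c + G.dist c w := hG.dist_triangle
          have h4 : G.dist r w ≤ G.dist r v + G.dist v w := hG.dist_triangle
          omega
      obtain ⟨u, P, S, hP, hPS, hSP, hSd, hScard⟩ := ih c (by omega)
      have hdS : ∀ x ∈ S, G.dist r v + 1 ≤ G.dist r x := by
        intro x hx
        rcases hSd x hx with rfl | h <;> omega
      refine ⟨u, SimpleGraph.Walk.cons hvc P, insert v (C.erase c) ∪ S, ?_, ?_, ?_, ?_, ?_⟩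
      · rw [SimpleGraph.Walk.cons_isPath_iff]
        refine ⟨hP, fun h => ?_⟩
        have := hdS v (hPS v h)
        omega
      · intro x hx
        rw [SimpleGraph.Walk.support_cons, List.mem_cons] at hx
        rcases hx with rfl | hx
        · simp
        · simp [hPS x hx]
      · intro x hx
        rw [SimpleGraph.Walk.support_cons]
        rw [Finset.mem_union, Finset.mem_insert, Finset.mem_erase] at hx
        rcases hx with (rfl | ⟨-, hx⟩) | hx
        · simp
        · right
          refine ⟨v, by simp, ?_⟩
          have : G.Adj v x ∧ G.dist r x = G.dist r v + 1 := by simpa [hC] using hx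
          exact this.1.symm
        · rcases hSP x hx with h | ⟨y, hy, hxy⟩
          · left; simp [h]
          · right; exact ⟨y, by simp [hy], hxy⟩
      · intro x hx
        rw [Finset.mem_union, Finset.mem_insert, Finset.mem_erase] at hx
        rcases hx with (rfl | ⟨-, hx⟩) | hx
        · simp
        · right
          have : G.Adj v x ∧ G.dist r x = G.dist r v + 1 := by simpa [hC] using hx
          omega
        · right
          have := hdS x hx
          omega
      · have hdisj : Disjoint (insert v (C.erase c)) S := by
          rw [Finset.disjoint_left]
          intro x hx hxS
          have h1 := hdS x hxS
          rw [Finset.mem_insert, Finset.mem_erase] at hx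
          rcases hx with rfl | ⟨hxc, hx⟩
          · omega
          · have : G.Adj v x ∧ G.dist r x = G.dist r v + 1 := by simpa [hC] using hx
            rcases hSd x hxS with h | h
            · exact hxc h
            · omega
        have hv' : v ∉ C.erase c := by simp [hC]
        have hcpos : 0 < C.card := Finset.card_pos.mpr hne
        rw [Finset.card_union_of_disjoint hdisj, Finset.card_insert_of_notMem hv',
          Finset.card_erase_of_mem hcC, Nat.sub_add_cancel hcpos, pow_add]
        have h2 : 2 * C.card ≤ 2 ^ C.card := by
          obtain ⟨k, hk⟩ : ∃ k, C.card = k + 1 := ⟨C.card - 1, by omega⟩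
          rw [hk, pow_succ, mul_comm]
          have := Nat.lt_two_pow_self (n := k)
          omega
        calc (descFin G r v).card + 1 ≤ C.card * (descFin G r c).card + 2 := by omega
          _ ≤ (2 * C.card) * ((descFin G r c).card + 1) := by nlinarith
          _ ≤ _ := Nat.mul_le_mul h2 hScard
    · rw [Finset.not_nonempty_iff_eq_empty] at hne
      refine ⟨v, SimpleGraph.Walk.nil, {v}, by simp, by simp, by simp, by simp, ?_⟩
      rw [hne] at hcard
      simp at hcard ⊢
      omega

lemma caterpillar_induce {V : Type*} (G : SimpleGraph V) (hG : G.IsTree) {u v : V}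
    (P : G.Walk u v) (hP : P.IsPath) (S : Set V) (hPS : ∀ x ∈ P.support, x ∈ S)
    (hSP : ∀ x ∈ S, x ∈ P.support ∨ ∃ y ∈ P.support, G.Adj x y) :
    IsCaterpillar (G.induce S) := by
  have hmem : ∀ x (hx : x ∈ P.support), (⟨x, hPS x hx⟩ : S) ∈ (P.induce S hPS).support := by
    intro x hx
    simp [SimpleGraph.Walk.support_induce, hx]
  have hdom : ∀ w : S, w ∈ (P.induce S hPS).support ∨
      ∃ x ∈ (P.induce S hPS).support, (G.induce S).Adj w x := by
    rintro ⟨w, hw⟩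
    rcases hSP w hw with h | ⟨y, hy, hwy⟩
    · exact Or.inl (hmem w h)
    · exact Or.inr ⟨_, hmem y hy, by simpa using hwy⟩
  have hreach : ∀ w : S, (G.induce S).Reachable ⟨u, hPS u P.start_mem_support⟩ w := by
    intro w
    rcases hdom w with h | ⟨y, hy, hwy⟩
    · exact ⟨(P.induce S hPS).takeUntil w h⟩
    · exact SimpleGraph.Reachable.trans ⟨(P.induce S hPS).takeUntil y hy⟩ hwy.symm.reachable
  refine ⟨⟨?_, hG.isAcyclic.induce S⟩, _, _, P.induce S hPS, ?_, hdom⟩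
  · haveI : Nonempty S := ⟨⟨u, hPS u P.start_mem_support⟩⟩
    exact ⟨fun a b => (hreach a).symm.trans (hreach b)⟩
  · apply SimpleGraph.Walk.IsPath.of_map (f := (SimpleGraph.Embedding.induce S).toHom)
    rw [SimpleGraph.Walk.map_induce]
    exact hP

/-- Every tree on `n ≥ 1` vertices contains a caterpillar on at least `log₂ n`
vertices as a subgraph. -/
theorem tree_contains_large_caterpillar {V : Type*} [Fintype V] (G : SimpleGraph V)
    (hG : G.IsTree) :
    ∃ H : G.Subgraph, IsCaterpillar H.coe ∧
      Real.logb 2 (Fintype.card V) ≤ (H.verts.ncard : ℝ) := by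
  obtain ⟨r⟩ := hG.connected.nonempty
  obtain ⟨u, P, S, hP, hPS, hSP, -, hcard⟩ := exists_spine G hG.connected r _ r le_rfl
  have hD : descFin G r r = Finset.univ := by
    ext w; simp [descFin]
  rw [hD, Finset.card_univ] at hcard
  refine ⟨(⊤ : G.Subgraph).induce (S : Set V), ?_, ?_⟩
  · have := caterpillar_induce G hG P hP (S : Set V) hPS hSP
    rw [SimpleGraph.induce_eq_coe_induce_top] at this
    exact this
  · have hpos : 0 < Fintype.card V := Fintype.card_pos_iff.mpr ⟨r⟩
    rw [SimpleGraph.Subgraph.induce_verts, Set.ncard_coe_finset,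
      Real.logb_le_iff_le_rpow (by norm_num) (by exact_mod_cast hpos), Real.rpow_natCast]
    have : Fintype.card V ≤ 2 ^ S.card := by omega
    exact_mod_cast this
end

section
/- If T is a tree on n vertices (n ≥ 1) and r is any vertex of T, then T contains a subgraph that is a caterpillar on at least log₂ n vertices in which r is an endpoint of the spine. -/
open scoped Classical

/-- A caterpillar whose spine is a path starting at the distinguished vertex `r`: a tree
in which every vertex is on, or adjacent to, a single path with endpoint `r`. -/
def IsCaterpillarFrom {V : Type*} (G : SimpleGraph V) (r : V) : Prop :=
  G.IsTree ∧ ∃ (v : V) (P : G.Walk r v), P.IsPath ∧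
    ∀ w : V, w ∈ P.support ∨ ∃ x ∈ P.support, G.Adj w x

lemma caterpillar_aux {V : Type*} [Fintype V] (G : SimpleGraph V) (hG : G.IsAcyclic) :
    ∀ (n : ℕ) (S : Finset V) (r : V), S.card ≤ n → r ∈ S →
      (∀ v ∈ S, ∃ p : G.Walk r v, ∀ x ∈ p.support, x ∈ S) →
      ∃ (v : V) (P : G.Walk r v) (A : Finset V), P.IsPath ∧ A ⊆ S ∧
        (∀ x ∈ P.support, x ∈ A) ∧
        (∀ a ∈ A, a ∈ P.support ∨ ∃ x ∈ P.support, G.Adj a x) ∧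
        S.card ≤ 2 ^ A.card := by
  intro n
  induction n with
  | zero =>
    intro S r hS hr
    have := Finset.card_pos.mpr ⟨r, hr⟩
    omega
  | succ n ih =>
    intro S r hS hr hconn
    let N : Finset V := S.filter (fun c => G.Adj r c)
    let B : V → Finset V := fun c =>
      S.filter (fun v => ∃ p : G.Walk c v, ∀ x ∈ p.support, x ∈ S ∧ x ≠ r)
    have hcov : S ⊆ insert r (N.biUnion B) := by
      intro v hv
      by_cases hvr : v = r
      · simp [hvr]
      obtain ⟨p, hp⟩ := hconn v hv
      have hq : ∀ x ∈ p.bypass.support, x ∈ S :=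
        fun x hx => hp x (p.support_bypass_subset_support hx)
      have hqp := p.bypass_isPath
      generalize p.bypass = q at hq hqp
      cases q with
      | nil => exact absurd rfl hvr
      | @cons _ c _ h q =>
        rw [SimpleGraph.Walk.cons_isPath_iff] at hqp
        simp only [SimpleGraph.Walk.support_cons, List.mem_cons, forall_eq_or_imp] at hq
        refine Finset.mem_insert_of_mem (Finset.mem_biUnion.mpr ⟨c, ?_, ?_⟩)
        · exact Finset.mem_filter.mpr ⟨hq.2 c q.start_mem_support, h⟩
        · refine Finset.mem_filter.mpr ⟨hv, q, fun x hx => ⟨hq.2 x hx, ?_⟩⟩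
          rintro rfl
          exact hqp.2 hx
    by_cases hN : N.Nonempty
    swap
    · rw [Finset.not_nonempty_iff_eq_empty] at hN
      rw [hN] at hcov
      refine ⟨r, .nil, {r}, by simp, by simpa using hr, by simp, by simp, ?_⟩
      have := Finset.card_le_card hcov
      simp at this ⊢
      omega
    obtain ⟨c, hcN, hmax⟩ := Finset.exists_max_image N (fun c => (B c).card) hN
    have hcS : c ∈ S := (Finset.mem_filter.mp hcN).1
    have hrc : G.Adj r c := (Finset.mem_filter.mp hcN).2
    have hcB : c ∈ B c := Finset.mem_filter.mpr ⟨hcS, .nil, by simp [hcS, hrc.ne']⟩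
    have hrB : r ∉ B c := by
      intro h
      obtain ⟨_, p, hp⟩ := Finset.mem_filter.mp h
      exact (hp r p.end_mem_support).2 rfl
    have hBS : B c ⊆ S := Finset.filter_subset _ _
    have hBlt : (B c).card < S.card :=
      Finset.card_lt_card ⟨hBS, fun h => hrB (h hr)⟩
    have hcard : S.card ≤ 1 + N.card * (B c).card := by
      have h1 := Finset.card_le_card hcov
      have h2 := Finset.card_insert_le r (N.biUnion B)
      have h3 := Finset.card_biUnion_le_card_mul N B (B c).card hmax
      omega
    obtain ⟨v, P, A, hP, hAS, hPA, hA, hle⟩ := ih (B c) c (by omega) hcB (by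
      intro v hv
      obtain ⟨_, p, hp⟩ := Finset.mem_filter.mp hv
      refine ⟨p, fun x hx => Finset.mem_filter.mpr ⟨(hp x hx).1, p.takeUntil x hx, fun y hy => ?_⟩⟩
      exact hp y (p.support_takeUntil_subset_support hx hy))
    have hinter : ∀ x ∈ N, x ∈ B c → x = c := by
      intro x hxN hxB
      by_contra hne
      obtain ⟨_, p, hp⟩ := Finset.mem_filter.mp hxB
      have hrx : G.Adj r x := (Finset.mem_filter.mp hxN).2
      have h1 : (SimpleGraph.Walk.cons hrc p.bypass).IsPath := by
        rw [SimpleGraph.Walk.cons_isPath_iff]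
        exact ⟨p.bypass_isPath, fun h => (hp r (p.support_bypass_subset_support h)).2 rfl⟩
      have h2 : (SimpleGraph.Walk.cons hrx .nil).IsPath := by
        rw [SimpleGraph.Walk.cons_isPath_iff]
        simp [hrx.ne]
      have h3 := hG.subsingleton_path _ _ |>.elim ⟨_, h1⟩ ⟨_, h2⟩
      have h4 : c ∈ (SimpleGraph.Walk.cons hrc p.bypass).support := by simp
      rw [Subtype.mk.inj h3] at h4
      simp at h4
      rcases h4 with h4 | h4
      · exact hrc.ne h4.symm
      · exact hne h4.symm
    refine ⟨v, .cons hrc P, insert r (N.erase c ∪ A), ?_, ?_, ?_, ?_, ?_⟩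
    · rw [SimpleGraph.Walk.cons_isPath_iff]
      exact ⟨hP, fun h => hrB (hAS (hPA r h))⟩
    · intro x hx
      simp only [Finset.mem_insert, Finset.mem_union, Finset.mem_erase] at hx
      rcases hx with rfl | ⟨_, hx⟩ | hx
      · exact hr
      · exact (Finset.mem_filter.mp hx).1
      · exact hBS (hAS hx)
    · intro x hx
      simp only [SimpleGraph.Walk.support_cons, List.mem_cons] at hx
      rcases hx with rfl | hx
      · simp
      · simp [hPA x hx]
    · intro x hx
      simp only [Finset.mem_insert, Finset.mem_union, Finset.mem_erase] at hx
      simp only [SimpleGraph.Walk.support_cons, List.mem_cons]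
      rcases hx with rfl | ⟨_, hx⟩ | hx
      · simp
      · exact Or.inr ⟨r, Or.inl rfl, (Finset.mem_filter.mp hx).2.symm⟩
      · rcases hA x hx with h | ⟨y, hy, h⟩
        · exact Or.inl (Or.inr h)
        · exact Or.inr ⟨y, Or.inr hy, h⟩
    · have hd : Disjoint (N.erase c) A := by
        rw [Finset.disjoint_left]
        intro x hx hxA
        rw [Finset.mem_erase] at hx
        exact hx.1 (hinter x hx.2 (hAS hxA))
      have hrn : r ∉ N.erase c ∪ A := by
        intro h
        rcases Finset.mem_union.mp h with h | h
        · exact (Finset.mem_filter.mp (Finset.mem_of_mem_erase h)).2.ne rfl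
        · exact hrB (hAS h)
      have hNpos : 0 < N.card := Finset.card_pos.mpr hN
      have hBpos : 0 < (B c).card := Finset.card_pos.mpr ⟨c, hcB⟩
      rw [Finset.card_insert_of_notMem hrn, Finset.card_union_of_disjoint hd,
        Finset.card_erase_of_mem hcN]
      obtain ⟨d, hd⟩ : ∃ d, N.card = d + 1 := ⟨N.card - 1, by omega⟩
      have hd2 : d + 1 ≤ 2 ^ d := Nat.lt_two_pow_self
      rw [hd] at hcard ⊢
      have h5 : (d + 1) * (B c).card ≤ 2 ^ d * 2 ^ A.card := Nat.mul_le_mul hd2 hle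
      have h6 : 1 ≤ (d + 1) * (B c).card := Nat.mul_pos (by omega) hBpos
      rw [Nat.add_sub_cancel, pow_succ, pow_add]
      omega

/-- Every tree on `n ≥ 1` vertices contains, for any prescribed vertex `r`, a caterpillar
on at least `log₂ n` vertices as a subgraph in which `r` is an endpoint of the spine. -/
theorem tree_contains_large_caterpillar_from {V : Type*} [Fintype V] (G : SimpleGraph V)
    (hG : G.IsTree) (r : V) :
    ∃ H : G.Subgraph, ∃ hr : r ∈ H.verts,
      IsCaterpillarFrom H.coe ⟨r, hr⟩ ∧
      Real.logb 2 (Fintype.card V) ≤ (H.verts.ncard : ℝ) := by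
  obtain ⟨v, P, A, hP, -, hPA, hA, hle⟩ := caterpillar_aux G hG.isAcyclic _ Finset.univ r le_rfl
    (Finset.mem_univ r) (fun v _ => ⟨(hG.connected.preconnected r v).some, by simp⟩)
  have hrA : r ∈ (A : Set V) := by simpa using hPA r P.start_mem_support
  have key : IsCaterpillarFrom (G.induce (A : Set V)) ⟨r, hrA⟩ := by
    let Q := P.induce (A : Set V) (fun x hx => by simpa using hPA x hx)
    have hQ : ∀ x : (A : Set V), x ∈ Q.support ↔ x.1 ∈ P.support := by
      intro x
      have h := SimpleGraph.Walk.support_induce (s := (A : Set V)) P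
        (fun x hx => by simpa using hPA x hx)
      change x ∈ (P.induce (A : Set V) _).support ↔ _
      rw [h]
      exact List.mem_attachWith _ _
    have hdom : ∀ w : (A : Set V), w ∈ Q.support ∨ ∃ x ∈ Q.support,
        (G.induce (A : Set V)).Adj w x := by
      rintro ⟨w, hw⟩
      rcases hA w (by simpa using hw) with h | ⟨x, hx, h⟩
      · exact Or.inl ((hQ _).mpr h)
      · exact Or.inr ⟨⟨x, by simpa using hPA x hx⟩, (hQ _).mpr hx, h⟩
    refine ⟨⟨?_, ?_⟩, _, Q, ?_, hdom⟩
    · rw [SimpleGraph.connected_iff_exists_forall_reachable]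
      refine ⟨⟨r, hrA⟩, fun w => ?_⟩
      rcases hdom w with h | ⟨x, hx, h⟩
      · exact ⟨Q.takeUntil w h⟩
      · exact SimpleGraph.Reachable.trans ⟨Q.takeUntil x hx⟩ h.symm.reachable
    · exact hG.isAcyclic.induce _
    · apply SimpleGraph.Walk.IsPath.of_map (f := (SimpleGraph.Embedding.induce _).toHom)
      have h := SimpleGraph.Walk.map_induce (s := (A : Set V)) P
        (fun x hx => by simpa using hPA x hx)
      exact h.symm ▸ hP
  rw [SimpleGraph.induce_eq_coe_induce_top] at key
  refine ⟨_, hrA, key, ?_⟩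
  have h2 : (Fintype.card V : ℝ) ≤ 2 ^ A.card := by
    exact_mod_cast hle
  have hpos : (0 : ℝ) < Fintype.card V := by
    exact_mod_cast Fintype.card_pos_iff.mpr ⟨r⟩
  rw [SimpleGraph.Subgraph.induce_verts, Set.ncard_coe_finset,
    Real.logb_le_iff_le_rpow (by norm_num) hpos, Real.rpow_natCast]
  exact h2
end
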